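/- arXiv:2505.19072 — 3 statements merged into one kernel-verified Lean document; each statement's English description precedes it below -/
import Mathlib

section
/- For any skew shape λ/μ and any positive integer n, the hybrid Grothendieck polynomial G_{λ/μ}(x_1,...,x_n; t; w) is symmetric in the variables x_1,...,x_n: for every permutation σ of {1,...,n}, substituting x_{σ(j)} for x_j (for all j) leaves the polynomial unchanged. -/
open scoped Classical

/-- A partition, given as its weakly decreasing sequence of parts (0-indexed),
with finitely many nonzero parts. -/
def IsPartitionFun (f : ℕ → ℕ) : Prop :=
  (∀ i, f (i + 1) ≤ f i) ∧ ∃ N, ∀ i, N ≤ i → f i = 0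

/-- Box `(i, j)` (row `i`, column `j`, both 0-indexed) lies in the skew shape `lam/mu`. -/
def InShape (lam mu : ℕ → ℕ) (i j : ℕ) : Prop :=
  mu i ≤ j ∧ j < lam i

/-- `A ≤ B` for finite sets of naturals: every element of `A` is at most every
element of `B` (for nonempty sets this says `max A ≤ min B`). -/
def FinsetLE (A B : Finset ℕ) : Prop :=
  ∀ a ∈ A, ∀ b ∈ B, a ≤ b

/-- A set-valued reverse plane partition of skew shape `lam/mu`: every box of the
shape is filled with a nonempty finite set of positive integers, the sets weakly
increase along rows and down columns, and boxes outside the shape are empty. -/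
def IsSVRPP (lam mu : ℕ → ℕ) (T : ℕ → ℕ → Finset ℕ) : Prop :=
  (∀ i j, ¬ InShape lam mu i j → T i j = ∅) ∧
  (∀ i j, InShape lam mu i j → (T i j).Nonempty) ∧
  (∀ i j x, x ∈ T i j → 1 ≤ x) ∧
  (∀ i j, InShape lam mu i j → InShape lam mu i (j + 1) → FinsetLE (T i j) (T i (j + 1))) ∧
  (∀ i j, InShape lam mu i j → InShape lam mu (i + 1) j → FinsetLE (T i j) (T (i + 1) j))

/-- An SVRPP all of whose entries are subsets of `{1, …, n}`. -/
def IsSVRPPn (lam mu : ℕ → ℕ) (n : ℕ) (T : ℕ → ℕ → Finset ℕ) : Prop :=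
  IsSVRPP lam mu T ∧ ∀ i j, T i j ⊆ Finset.Icc 1 n

/-- `ircont T v` = number of columns of `T` containing a set that contains `v`. -/
noncomputable def ircont (T : ℕ → ℕ → Finset ℕ) (v : ℕ) : ℕ :=
  Set.ncard {j : ℕ | ∃ i, v ∈ T i j}

/-- `ceq lam mu T i` = number of boxes `(i,j)` of the shape with `(i+1,j)` also in the
shape and `max T(i,j) = min T(i+1,j)`. -/
noncomputable def ceq (lam mu : ℕ → ℕ) (T : ℕ → ℕ → Finset ℕ) (i : ℕ) : ℕ :=
  Set.ncard {j : ℕ | InShape lam mu i j ∧ InShape lam mu (i + 1) j ∧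
    ∃ m, m ∈ T i j ∧ (∀ x ∈ T i j, x ≤ m) ∧ m ∈ T (i + 1) j ∧ ∀ x ∈ T (i + 1) j, m ≤ x}

/-- `exv lam mu T i` = excess of row `i`: the sum over the boxes of row `i` of
(cardinality of the filling minus one). -/
def exv (lam mu : ℕ → ℕ) (T : ℕ → ℕ → Finset ℕ) (i : ℕ) : ℕ :=
  ∑ j ∈ Finset.Ico (mu i) (lam i), ((T i j).card - 1)

/-- The hybrid Grothendieck polynomial `G_{lam/mu}(x_1,…,x_n; t; w)`, a polynomial in
`x_1, …, x_n` (variables `Sum.inl v`, `v : Fin n`, with `x_{v+1} = X (Sum.inl v)`) with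
coefficients involving the variables `t_r = X (Sum.inr (Sum.inl r))` and
`w_r = X (Sum.inr (Sum.inr r))` (`r` ranging over the 0-indexed rows). -/
noncomputable def hybridG (lam mu : ℕ → ℕ) (n : ℕ) :
    MvPolynomial (Fin n ⊕ ℕ ⊕ ℕ) ℤ :=
  ∑ᶠ T ∈ {T : ℕ → ℕ → Finset ℕ | IsSVRPPn lam mu n T},
    (∏ v : Fin n, MvPolynomial.X (Sum.inl v) ^ ircont T ((v : ℕ) + 1)) *
    (∏ᶠ r : ℕ, MvPolynomial.X (Sum.inr (Sum.inl r)) ^ ceq lam mu T r) *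
    (∏ᶠ r : ℕ, MvPolynomial.X (Sum.inr (Sum.inr r)) ^ exv lam mu T r)

/-!
It suffices to exchange two adjacent variables `x_a` and `x_{a+1}`. Replacing every entry `a` of a
filling by `a + 1` gives a filling `K` without the entry `a`; the claim holds for the fillings over
each `K` separately. The boxes of `K` that contain `a + 1` form the band between two partitions,
with rows `p j, …, q j - 1` in column `j`. A filling over `K` is determined by one seam
`s j ∈ [2 p j, 2 q j]` for each column, at which its entries change from `a` to `a + 1`: an odd seam
`2 r + 1` puts both entries in row `r`, an even seam `2 r` separates rows `r - 1` and `r`. Rows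
increase weakly if and only if no seam lies below the next one to its right, rounded up to an even
number.

The monomial is a product over the columns. Exchanging the variables exchanges the weights of the
two extreme seams of a column and fixes all others, while the ratio of the weight of a seam to that
of the lowest one is the same in neighbouring columns. Let `T c k` be the sum over the first `c`
columns with `k ≤ s (c - 1)`. It need not be symmetric for `0 < k`, but becomes so after adding the
terms that continue below `k` with the lowest seams in the last columns; this is proved by
descending induction on `k`, starting from the top seam. At `k = 0` nothing is added.
-/

theorem IsPartitionFun.antitone {f : ℕ → ℕ} (hf : IsPartitionFun f) : Antitone f :=
  antitone_nat_of_succ_le hf.1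

theorem IsPartitionFun.inShape_lt {lam mu : ℕ → ℕ} (hlam : IsPartitionFun lam) {r j : ℕ}
    (h : InShape lam mu r j) : j < lam 0 :=
  h.2.trans_le (hlam.antitone r.zero_le)

theorem IsSVRPP.inShape {lam mu : ℕ → ℕ} {T : ℕ → ℕ → Finset ℕ} (hT : IsSVRPP lam mu T)
    {r j x : ℕ} (hx : x ∈ T r j) : InShape lam mu r j :=
  not_imp_comm.1 (hT.1 r j) (Finset.ne_empty_of_mem hx)

namespace HybridGrothendieck

open Finset

section Transfer

/-- The least even number that is at least `s`: the smallest seam position allowed in a column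
whose right neighbour has its seam at `s`. -/
def evenCeil (s : ℕ) : ℕ := 2 * ((s + 1) / 2)

/-- `p` and `q` are the column lengths of two nested partitions, so that the cells `(r, j)` with
`p j ≤ r < q j` form a skew shape. -/
structure IsBand (p q : ℕ → ℕ) : Prop where
  antitone_left : Antitone p
  antitone_right : Antitone q
  le : ∀ j, p j ≤ q j

variable {R : Type*} [CommSemiring R] (p q : ℕ → ℕ) (W : ℕ → ℕ → R)

/-- The weighted count of the seam sequences on the columns `0, …, c - 1` of the band between `p`
and `q` whose last seam is at least `k`. A seam at `s` in column `j` weighs `W j s`. -/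
def transfer : ℕ → ℕ → R
  | 0, _ => 1
  | c + 1, k => ∑ s ∈ Icc (max k (2 * p c)) (2 * q c), W c s * transfer c (evenCeil s)

/-- The completion of `transfer` by the seam sequences in which the last columns have their seam
below `k`, moved to the bottom position. Unlike `transfer` it is symmetric for every `k` in the
range of the band. -/
def symTransfer : ℕ → ℕ → R
  | 0, _ => 1
  | c + 1, k => transfer p q W (c + 1) k +
      if 2 * p c < k then W c (2 * p c) * symTransfer c k else 0

variable {p q W}

theorem evenCeil_two_mul (s : ℕ) : evenCeil (2 * s) = 2 * s := by
  grind [evenCeil]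

theorem two_mul_lt_evenCeil_iff {r s : ℕ} : 2 * r < evenCeil s ↔ 2 * r < s := by
  grind [evenCeil]

theorem transfer_succ_of_mem {c k : ℕ} (hp : 2 * p c ≤ k) (hq : k ≤ 2 * q c) :
    transfer p q W (c + 1) k =
      W c k * transfer p q W c (evenCeil k) + transfer p q W (c + 1) (k + 1) := by
  rw [transfer, transfer, max_eq_left hp, max_eq_left (by omega), Icc_add_one_left_eq_Ioc,
    Icc_eq_cons_Ioc hq, sum_cons]

theorem transfer_succ_of_gt {c k : ℕ} (hk : 2 * q c < k) : transfer p q W (c + 1) k = 0 := by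
  rw [transfer, Icc_eq_empty (by omega), sum_empty]

theorem transfer_succ_of_le {c k : ℕ} (hk : k ≤ 2 * p c) :
    transfer p q W (c + 1) k = transfer p q W (c + 1) (2 * p c) := by
  rw [transfer, transfer, max_eq_right hk, max_self]

theorem transfer_succ_bot {c : ℕ} (h : p c ≤ q c) :
    transfer p q W (c + 1) (2 * p c) =
      W c (2 * p c) * transfer p q W c (2 * p c) + transfer p q W (c + 1) (2 * p c + 1) := by
  rw [transfer_succ_of_mem le_rfl (by omega), evenCeil_two_mul]

theorem transfer_succ_top {c : ℕ} (h : p c ≤ q c) :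
    transfer p q W (c + 1) (2 * q c) = W c (2 * q c) * transfer p q W c (2 * q c) := by
  rw [transfer_succ_of_mem (by omega) le_rfl, transfer_succ_of_gt (by omega), add_zero,
    evenCeil_two_mul]

theorem symTransfer_succ_of_le {c k : ℕ} (hk : k ≤ 2 * p c) :
    symTransfer p q W (c + 1) k = transfer p q W (c + 1) k := by
  rw [symTransfer, if_neg hk.not_gt, add_zero]

theorem symTransfer_succ_of_gt {c k : ℕ} (hk : 2 * p c < k) :
    symTransfer p q W (c + 1) k =
      transfer p q W (c + 1) k + W c (2 * p c) * symTransfer p q W c k := by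
  rw [symTransfer, if_pos hk]

theorem symTransfer_eq_transfer {c k : ℕ} (hk : ∀ j < c, k ≤ 2 * p j) :
    symTransfer p q W c k = transfer p q W c k := by
  cases c with
  | zero => rfl
  | succ c => exact symTransfer_succ_of_le (hk c c.lt_succ_self)

theorem IsBand.symTransfer_bot (hb : IsBand p q) (c : ℕ) :
    symTransfer p q W c (2 * p c) = transfer p q W c (2 * p c) :=
  symTransfer_eq_transfer fun _ hj => Nat.mul_le_mul_left 2 (hb.antitone_left hj.le)

/-- The invariance properties of the seam weights under the involution `τ` that exchanges the two
variables: the two extreme seams of a column are exchanged, the others are fixed, and the ratio of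
the weight of a seam to that of the bottom seam is the same in neighbouring columns. -/
structure IsSwapWeight (τ : R →+* R) (p q : ℕ → ℕ) (W : ℕ → ℕ → R) : Prop where
  map_bot : ∀ j, τ (W j (2 * p j)) = W j (2 * q j)
  map_top : ∀ j, τ (W j (2 * q j)) = W j (2 * p j)
  map_mid : ∀ j s, 2 * p j < s → s < 2 * q j → τ (W j s) = W j s
  exchange_mid : ∀ j s, 2 * p j < s → s < 2 * q (j + 1) →
    W (j + 1) s * W j (2 * p j) = W (j + 1) (2 * p (j + 1)) * W j s
  exchange_top : ∀ j, p j < q (j + 1) →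
    W (j + 1) (2 * q (j + 1)) * W j (2 * p j) = W (j + 1) (2 * p (j + 1)) * W j (2 * q j)

end Transfer

section SwapInvariance

variable {R : Type*} [CommRing R] {p q : ℕ → ℕ} {W : ℕ → ℕ → R} {τ : R →+* R}

theorem transfer_succ_eq_sub (c k : ℕ) :
    transfer p q W (c + 1) k = symTransfer p q W (c + 1) k -
      if 2 * p c < k then W c (2 * p c) * symTransfer p q W c k else 0 := by
  rw [symTransfer, add_sub_cancel_right]

/-- Lowering the last seam from above `k` to `k`: the terms that `symTransfer` adds to `transfer`
absorb the ones that break the symmetry. -/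
theorem IsBand.symTransfer_succ_eq_add (hb : IsBand p q)
    (exchange : ∀ j s, 2 * p j < s → s < 2 * q (j + 1) →
      W (j + 1) s * W j (2 * p j) = W (j + 1) (2 * p (j + 1)) * W j s)
    {c k : ℕ} (hk : k < 2 * q c) :
    symTransfer p q W (c + 1) k = symTransfer p q W (c + 1) (k + 1) +
      if 2 * p c < k then W c k * symTransfer p q W c (evenCeil k) else 0 := by
  induction c with
  | zero =>
    rcases lt_trichotomy k (2 * p 0) with h | rfl | h
    · rw [if_neg h.not_gt, add_zero, symTransfer_succ_of_le h.le, symTransfer_succ_of_le h,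
        transfer_succ_of_le h.le, transfer_succ_of_le h]
    · rw [if_neg (lt_irrefl _), add_zero, symTransfer_succ_of_le le_rfl,
        symTransfer_succ_of_gt (Nat.lt_succ_self _), transfer_succ_bot (hb.le 0), add_comm]
      rfl
    · rw [if_pos h, symTransfer_succ_of_gt h, symTransfer_succ_of_gt (h.trans k.lt_succ_self),
        transfer_succ_of_mem h.le hk.le]
      simp only [transfer, symTransfer]
      ring
  | succ c ih =>
    have hp : p (c + 1) ≤ p c := hb.antitone_left c.le_succ
    have hq : q (c + 1) ≤ q c := hb.antitone_right c.le_succ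
    have ih := ih (by omega)
    rcases lt_trichotomy k (2 * p (c + 1)) with h | rfl | h
    · rw [if_neg h.not_gt, add_zero, symTransfer_succ_of_le h.le, symTransfer_succ_of_le h,
        transfer_succ_of_le h.le, transfer_succ_of_le h]
    · rw [if_neg (by omega), add_zero] at ih
      rw [if_neg (lt_irrefl _), add_zero, symTransfer_succ_of_le le_rfl,
        symTransfer_succ_of_gt (Nat.lt_succ_self _), transfer_succ_bot (hb.le _), ← ih,
        hb.symTransfer_bot, add_comm]
    · rw [if_pos h, symTransfer_succ_of_gt h, symTransfer_succ_of_gt (h.trans k.lt_succ_self),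
        transfer_succ_of_mem h.le hk.le, transfer_succ_eq_sub c, ih]
      simp only [two_mul_lt_evenCeil_iff]
      split_ifs with hck
      · linear_combination (-symTransfer p q W c (evenCeil k)) * exchange c k hck hk
      · ring

theorem IsSwapWeight.map_symTransfer_top (hW : IsSwapWeight τ p q W) {c : ℕ} (hc : p c < q c)
    (ih : ∀ c' ≤ c, τ (symTransfer p q W c' (2 * q c)) = symTransfer p q W c' (2 * q c)) :
    τ (symTransfer p q W (c + 1) (2 * q c)) = symTransfer p q W (c + 1) (2 * q c) := by
  rw [symTransfer, if_pos (by omega), transfer_succ_top hc.le]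
  cases c with
  | zero =>
    simp only [transfer, symTransfer, map_add, map_mul, map_one, hW.map_top, hW.map_bot]
    ring
  | succ c =>
    rw [transfer_succ_eq_sub c]
    split_ifs with h
    · simp only [map_add, map_sub, map_mul, hW.map_top, hW.map_bot, ih _ le_rfl, ih c c.le_succ]
      linear_combination symTransfer p q W c (2 * q (c + 1)) * hW.exchange_top c (by omega)
    · simp only [map_add, map_mul, hW.map_top, hW.map_bot, ih _ le_rfl, sub_zero]
      ring

theorem IsSwapWeight.map_symTransfer (hW : IsSwapWeight τ p q W) (hb : IsBand p q) {c k : ℕ}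
    (hk : ∀ j < c, k ≤ 2 * q j) : τ (symTransfer p q W c k) = symTransfer p q W c k := by
  induction c using Nat.strong_induction_on generalizing k with
  | _ c ih =>
  cases c with
  | zero => exact map_one τ
  | succ c =>
    have ih {c' k : ℕ} (hc' : c' ≤ c) (hk : k ≤ 2 * q c) :
        τ (symTransfer p q W c' k) = symTransfer p q W c' k :=
      ih c' (by omega) fun j hj =>
        hk.trans (Nat.mul_le_mul_left 2 (hb.antitone_right (by omega)))
    replace hk := hk c c.lt_succ_self
    rcases (hb.le c).eq_or_lt with hc | hc
    · have hτ := hW.map_bot c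
      rw [← hc] at hk hτ
      rw [symTransfer_succ_of_le hk, transfer_succ_of_le hk, hc, transfer_succ_top (hb.le c), ← hc,
        ← hb.symTransfer_bot, map_mul, hτ, ih le_rfl (by rw [hc])]
    · induction hk using Nat.decreasingInduction with
      | self => exact hW.map_symTransfer_top hc fun c' hc' => ih hc' le_rfl
      | of_succ k hk ihk =>
        rw [hb.symTransfer_succ_eq_add hW.exchange_mid hk, map_add, ihk]
        split_ifs with hpk
        · rw [map_mul, hW.map_mid c k hpk hk, ih le_rfl (by grind [evenCeil])]
        · rw [map_zero]

theorem IsSwapWeight.map_transfer (hW : IsSwapWeight τ p q W) (hb : IsBand p q) (c : ℕ) :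
    τ (transfer p q W c 0) = transfer p q W c 0 := by
  rw [← symTransfer_eq_transfer fun _ _ => Nat.zero_le _, hW.map_symTransfer hb]
  exact fun _ _ => Nat.zero_le _

end SwapInvariance

section SeamWords

/-- The finite set of seam sequences counted by `transfer p q W c k`, extended by zero beyond
column `c`. -/
noncomputable def seamWords (p q : ℕ → ℕ) : ℕ → ℕ → Finset (ℕ → ℕ)
  | 0, _ => {0}
  | c + 1, k => (Icc (max k (2 * p c)) (2 * q c)).biUnion fun s =>
      (seamWords p q c (evenCeil s)).image (Function.update · c s)

variable {p q : ℕ → ℕ}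

theorem mem_seamWords {c k : ℕ} {f : ℕ → ℕ} :
    f ∈ seamWords p q c k ↔
      (∀ j < c, 2 * p j ≤ f j ∧ f j ≤ 2 * q j) ∧ (∀ j, j + 1 < c → evenCeil (f (j + 1)) ≤ f j) ∧
        (∀ j, j + 1 = c → k ≤ f j) ∧ ∀ j, c ≤ j → f j = 0 := by
  induction c generalizing k f with
  | zero => simp [seamWords, funext_iff]
  | succ c ih =>
    simp only [seamWords, mem_biUnion, mem_image, mem_Icc, ih]
    constructor
    · rintro ⟨s, hs, g, ⟨hrange, hchain, hlast, hzero⟩, rfl⟩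
      refine ⟨fun j hj => ?_, fun j hj => ?_, fun j hj => ?_, fun j hj => ?_⟩
      · rcases eq_or_ne j c with rfl | hjc
        · rw [Function.update_self]
          omega
        · simpa [hjc] using hrange j (by omega)
      · rcases eq_or_ne (j + 1) c with rfl | hjc
        · simpa using hlast j rfl
        · simpa [hjc, show j ≠ c by omega] using hchain j (by omega)
      · obtain rfl : j = c := by omega
        rw [Function.update_self]
        omega
      · simpa [show j ≠ c by omega] using hzero j (by omega)
    · rintro ⟨hrange, hchain, hlast, hzero⟩
      have hc := hrange c c.lt_succ_self
      have hk := hlast c rfl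
      refine ⟨f c, by omega, Function.update f c 0, ⟨fun j hj => ?_, fun j hj => ?_, ?_, ?_⟩, ?_⟩
      · simpa [hj.ne] using hrange j (by omega)
      · simpa [show j ≠ c by omega, show j + 1 ≠ c by omega] using hchain j (by omega)
      · rintro j rfl
        simpa using hchain j (by omega)
      · intro j hj
        rcases eq_or_ne j c with rfl | hjc
        · simp
        · simpa [hjc] using hzero j (by omega)
      · simp

theorem mem_seamWords_zero {c : ℕ} {f : ℕ → ℕ} (hpq : ∀ j, p j ≤ q j) (hc : ∀ j, c ≤ j → q j = 0) :
    f ∈ seamWords p q c 0 ↔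
      (∀ j, 2 * p j ≤ f j ∧ f j ≤ 2 * q j) ∧ ∀ j, evenCeil (f (j + 1)) ≤ f j := by
  rw [mem_seamWords]
  constructor
  · rintro ⟨hrange, hchain, -, hzero⟩
    refine ⟨fun j => ?_, fun j => ?_⟩
    · rcases lt_or_ge j c with hj | hj
      · exact hrange j hj
      · have := hpq j
        grind
    · rcases lt_or_ge (j + 1) c with hj | hj
      · exact hchain j hj
      · rw [hzero _ hj]
        exact Nat.zero_le _
  · rintro ⟨hrange, hchain⟩
    exact ⟨fun j _ => hrange j, fun j _ => hchain j, fun _ _ => Nat.zero_le _,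
      fun j hj => by simpa [hc j hj] using (hrange j).2⟩

theorem sum_seamWords {R : Type*} [CommSemiring R] (W : ℕ → ℕ → R) (c k : ℕ) :
    ∑ f ∈ seamWords p q c k, ∏ j ∈ range c, W j (f j) = transfer p q W c k := by
  induction c generalizing k with
  | zero => simp [seamWords, transfer]
  | succ c ih =>
    rw [seamWords, sum_biUnion, transfer]
    · refine sum_congr rfl fun s _ => ?_
      rw [sum_image, ← ih, mul_sum]
      · refine sum_congr rfl fun f _ => ?_
        rw [prod_range_succ, Function.update_self, mul_comm]
        congr 1
        exact prod_congr rfl fun j hj => by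
          rw [Function.update_of_ne (mem_range.1 hj).ne]
      · intro f hf g hg hfg
        funext j
        rcases eq_or_ne j c with rfl | hj
        · rw [(mem_seamWords.1 hf).2.2.2 j le_rfl, (mem_seamWords.1 hg).2.2.2 j le_rfl]
        · simpa [hj] using congrFun hfg j
    · intro s _ s' _ hss'
      refine disjoint_left.2 fun f hf hf' => hss' ?_
      obtain ⟨g, -, rfl⟩ := mem_image.1 hf
      obtain ⟨g', -, hg'⟩ := mem_image.1 hf'
      simpa using (congrFun hg' c).symm

end SeamWords

section Collapse

/-- The filling obtained from `T` by replacing every entry `a` by `a + 1`. -/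
def collapse (a : ℕ) (T : ℕ → ℕ → Finset ℕ) : ℕ → ℕ → Finset ℕ :=
  fun r j => (T r j).image fun x => if x = a then a + 1 else x

variable {lam mu : ℕ → ℕ} {n a : ℕ} {T : ℕ → ℕ → Finset ℕ}

theorem mem_collapse {r j x : ℕ} :
    x ∈ collapse a T r j ↔ x ∈ T r j ∧ x ≠ a ∨ x = a + 1 ∧ a ∈ T r j := by
  simp only [collapse, mem_image]
  grind

theorem notMem_collapse (r j : ℕ) : a ∉ collapse a T r j := by
  simp [mem_collapse]

theorem nonempty_collapse_iff {r j : ℕ} : (collapse a T r j).Nonempty ↔ (T r j).Nonempty :=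
  image_nonempty

theorem collapse_eq_empty_iff {r j : ℕ} : collapse a T r j = ∅ ↔ T r j = ∅ :=
  image_eq_empty

theorem finsetLE_iff_collapse {r j r' j' : ℕ} :
    FinsetLE (T r j) (T r' j') ↔ FinsetLE (collapse a T r j) (collapse a T r' j') ∧
      (a + 1 ∈ T r j → a ∉ T r' j') := by
  simp only [FinsetLE, collapse, forall_mem_image]
  constructor
  · refine fun h => ⟨fun x hx y hy => ?_, fun hx hy => by simpa using h _ hx _ hy⟩
    have := h x hx y hy
    split_ifs <;> omega
  · rintro ⟨h, h'⟩ x hx y hy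
    have := h hx hy
    by_contra hlt
    obtain ⟨rfl, rfl⟩ : x = a + 1 ∧ y = a := by split_ifs at this <;> omega
    exact h' hx hy

theorem isSVRPPn_iff_collapse (ha : 1 ≤ a) (han : a < n) :
    IsSVRPPn lam mu n T ↔ IsSVRPPn lam mu n (collapse a T) ∧
      (∀ r j, a + 1 ∈ T r j → a ∉ T r (j + 1)) ∧ ∀ r j, a + 1 ∈ T r j → a ∉ T (r + 1) j := by
  have hpos : (∀ r j x, x ∈ T r j → 1 ≤ x) ↔ ∀ r j x, x ∈ collapse a T r j → 1 ≤ x := by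
    simp only [mem_collapse]
    grind
  have hsub : (∀ r j, T r j ⊆ Icc 1 n) ↔ ∀ r j, collapse a T r j ⊆ Icc 1 n := by
    simp only [subset_iff, mem_collapse, mem_Icc]
    grind
  constructor
  · rintro ⟨hT, hn⟩
    obtain ⟨hempty, hne, hT1, hrow, hcol⟩ := id hT
    refine ⟨⟨⟨?_, ?_, hpos.1 hT1, ?_, ?_⟩, hsub.1 hn⟩, ?_, ?_⟩
    · simpa only [collapse_eq_empty_iff] using hempty
    · simpa only [nonempty_collapse_iff] using hne
    · exact fun r j h h' => (finsetLE_iff_collapse.1 (hrow r j h h')).1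
    · exact fun r j h h' => (finsetLE_iff_collapse.1 (hcol r j h h')).1
    · exact fun r j h h' => (finsetLE_iff_collapse.1
        (hrow r j (hT.inShape h) (hT.inShape h'))).2 h h'
    · exact fun r j h h' => (finsetLE_iff_collapse.1
        (hcol r j (hT.inShape h) (hT.inShape h'))).2 h h'
  · rintro ⟨⟨⟨hempty, hne, hT1, hrow, hcol⟩, hn⟩, hrow', hcol'⟩
    refine ⟨⟨?_, ?_, hpos.2 hT1, ?_, ?_⟩, hsub.2 hn⟩
    · simpa only [collapse_eq_empty_iff] using hempty
    · simpa only [nonempty_collapse_iff] using hne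
    · exact fun r j h h' => finsetLE_iff_collapse.2 ⟨hrow r j h h', hrow' r j⟩
    · exact fun r j h h' => finsetLE_iff_collapse.2 ⟨hcol r j h h', hcol' r j⟩

end Collapse

section Shape

variable {lam mu : ℕ → ℕ} {K : ℕ → ℕ → Finset ℕ}

theorem exists_antitone_lt_iff {P : ℕ → ℕ → Prop} (hP : ∀ j, ∃ r, ¬ P r j)
    (hrow : ∀ r j, P r (j + 1) → P r j) (hcol : ∀ r j, P (r + 1) j → P r j) :
    ∃ p : ℕ → ℕ, Antitone p ∧ ∀ r j, r < p j ↔ P r j := by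
  have hlt : ∀ r j, r < Nat.find (hP j) ↔ P r j := by
    intro r j
    simp only [Nat.lt_find_iff, not_not]
    exact ⟨fun h => h r le_rfl, fun h m hm => antitone_nat_of_succ_le (f := (P · j))
      (fun r => hcol r j) hm h⟩
  exact ⟨fun j => Nat.find (hP j), antitone_nat_of_succ_le fun j =>
    le_of_forall_lt fun r hr => (hlt r j).2 (hrow r j ((hlt r (j + 1)).1 hr)), hlt⟩

/-- Here `p` gives the column lengths of the partition that consists of `μ` and the boxes whose
entries satisfy `S`. -/
theorem exists_antitone_lt_iff_lt_or (hlam : IsPartitionFun lam) (hmu : IsPartitionFun mu)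
    (hsub : ∀ r, mu r ≤ lam r) (hK : IsSVRPP lam mu K) {S : Finset ℕ → Prop} (hS : ¬ S ∅)
    (hle : ∀ A B, S B → A.Nonempty → FinsetLE A B → S A) :
    ∃ p : ℕ → ℕ, Antitone p ∧ (∀ j, lam 0 ≤ j → p j = 0) ∧
      ∀ r j, r < p j ↔ j < mu r ∨ S (K r j) := by
  have hlt : ∀ r j, j < mu r ∨ S (K r j) → j < lam r := by
    rintro r j (h | h)
    · exact h.trans_le (hsub r)
    · by_contra hj
      exact hS (hK.1 r j (fun hs => hj hs.2) ▸ h)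
  have hrow : ∀ r j, j + 1 < mu r ∨ S (K r (j + 1)) → j < mu r ∨ S (K r j) := by
    intro r j h
    rcases lt_or_ge j (mu r) with hj | hj
    · exact .inl hj
    have hs' : InShape lam mu r (j + 1) := ⟨by omega, hlt _ _ h⟩
    have hs : InShape lam mu r j := ⟨hj, (Nat.lt_succ_self j).trans hs'.2⟩
    exact .inr (hle _ _ (h.resolve_left hs'.1.not_gt) (hK.2.1 _ _ hs) (hK.2.2.2.1 r j hs hs'))
  have hcol : ∀ r j, j < mu (r + 1) ∨ S (K (r + 1) j) → j < mu r ∨ S (K r j) := by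
    intro r j h
    rcases lt_or_ge j (mu r) with hj | hj
    · exact .inl hj
    have hs' : InShape lam mu (r + 1) j := ⟨(hmu.1 r).trans hj, hlt _ _ h⟩
    have hs : InShape lam mu r j := ⟨hj, hs'.2.trans_le (hlam.1 r)⟩
    exact .inr (hle _ _ (h.resolve_left hs'.1.not_gt) (hK.2.1 _ _ hs) (hK.2.2.2.2 r j hs hs'))
  obtain ⟨N, hN⟩ := hlam.2
  obtain ⟨p, hp, hpS⟩ := exists_antitone_lt_iff (P := fun r j => j < mu r ∨ S (K r j))
    (fun j => ⟨N, fun h => by simpa [hN N le_rfl] using hlt N j h⟩) hrow hcol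
  exact ⟨p, hp, fun j hj => Nat.eq_zero_of_not_pos fun h =>
    (hlt 0 j ((hpS 0 j).1 h)).not_ge hj, hpS⟩

theorem exists_isBand_mem_iff (hlam : IsPartitionFun lam) (hmu : IsPartitionFun mu)
    (hsub : ∀ r, mu r ≤ lam r) (hK : IsSVRPP lam mu K) (b : ℕ) :
    ∃ p q : ℕ → ℕ, IsBand p q ∧ (∀ j, lam 0 ≤ j → q j = 0) ∧
      ∀ r j, b ∈ K r j ↔ p j ≤ r ∧ r < q j := by
  obtain ⟨p, hp, -, hpK⟩ := exists_antitone_lt_iff_lt_or hlam hmu hsub hK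
    (S := fun A => (∃ x ∈ A, x < b) ∧ b ∉ A) (by simp) (by grind [FinsetLE, Finset.Nonempty])
  obtain ⟨q, hq, hq0, hqK⟩ := exists_antitone_lt_iff_lt_or hlam hmu hsub hK
    (S := fun A => ∃ x ∈ A, x ≤ b) (by simp) (by grind [FinsetLE, Finset.Nonempty])
  refine ⟨p, q, ⟨hp, hq, fun j => le_of_forall_lt fun r hr => ?_⟩, hq0, fun r j => ?_⟩
  · rw [hpK] at hr
    rw [hqK]
    grind
  · rw [← not_lt, hpK, hqK]
    have : b ∈ K r j → mu r ≤ j := fun hb => (hK.inShape hb).1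
    grind

end Shape

section Seam

/-- For a column whose rows `r` with `A r` contain `a` and those with `B r` contain `a + 1`. -/
theorem exists_seam {A B : ℕ → Prop} {p q : ℕ} (hpq : p ≤ q)
    (hAB : ∀ r, p ≤ r → r < q → A r ∨ B r) (hBA : ∀ r, B r → ¬ A (r + 1)) :
    ∃ s, 2 * p ≤ s ∧ s ≤ 2 * q ∧
      ∀ r, p ≤ r → r < q → (A r ↔ 2 * r + 1 ≤ s) ∧ (B r ↔ s ≤ 2 * r + 1) := by
  induction q, hpq using Nat.le_induction with
  | base => exact ⟨2 * p, le_rfl, le_rfl, fun r _ _ => by omega⟩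
  | succ q hpq ih =>
    obtain ⟨s, hps, hsq, hs⟩ := ih fun r hr hrq => hAB r hr (by omega)
    have hq := hAB q hpq q.lt_succ_self
    rcases hsq.lt_or_eq with hlt | rfl
    · have hA : ¬ A q := by
        obtain ⟨r, rfl⟩ : ∃ r, q = r + 1 := ⟨q - 1, by omega⟩
        exact hBA r ((hs r (by omega) r.lt_succ_self).2.2 (by omega))
      refine ⟨s, hps, by omega, fun r hr hrq => ?_⟩
      rcases (Nat.lt_succ_iff.1 hrq).lt_or_eq with h | rfl
      · exact hs r hr h
      · exact ⟨iff_of_false hA (by omega), iff_of_true (hq.resolve_left hA) (by omega)⟩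
    · refine ⟨if B q then if A q then 2 * q + 1 else 2 * q else 2 * q + 2, ?_, ?_, ?_⟩
      · split_ifs <;> omega
      · split_ifs <;> omega
      · intro r hr hrq
        rcases (Nat.lt_succ_iff.1 hrq).lt_or_eq with h | rfl
        · rw [(hs r hr h).1, (hs r hr h).2]
          split_ifs <;> omega
        · split_ifs <;> grind

/-- The column obtained from `K` by splitting each entry `a + 1` into `a` or `a + 1` or both, as
prescribed by the seam `s`: row `r` contains `a` if `2 r + 1 ≤ s` and `a + 1` if `s ≤ 2 r + 1`.
Thus an odd `s = 2 r + 1` puts both entries in row `r`. -/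
def expandColumn (a s : ℕ) (K : ℕ → Finset ℕ) (r : ℕ) : Finset ℕ :=
  if a + 1 ∈ K r then
    (K r).erase (a + 1) ∪ ((if 2 * r + 1 ≤ s then {a} else ∅) ∪
      if s ≤ 2 * r + 1 then {a + 1} else ∅)
  else K r

/-- The filling obtained from `K` by expanding every column `j` with the seam `f j`; a right inverse
of `collapse`. -/
def expand (a : ℕ) (f : ℕ → ℕ) (K : ℕ → ℕ → Finset ℕ) : ℕ → ℕ → Finset ℕ :=
  fun r j => expandColumn a (f j) (K · j) r

theorem mem_expandColumn {a s r x : ℕ} {K : ℕ → Finset ℕ} :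
    x ∈ expandColumn a s K r ↔ x ∈ K r ∧ x ≠ a + 1 ∨
      a + 1 ∈ K r ∧ (x = a ∧ 2 * r + 1 ≤ s ∨ x = a + 1 ∧ s ≤ 2 * r + 1) := by
  unfold expandColumn
  split_ifs <;> grind

variable {a : ℕ} {p q : ℕ → ℕ} {K T : ℕ → ℕ → Finset ℕ} {lam mu f : ℕ → ℕ} {n c : ℕ}

theorem collapse_expand (ha : ∀ r j, a ∉ K r j) (f : ℕ → ℕ) : collapse a (expand a f K) = K := by
  ext r j x
  have := ha r j
  simp only [mem_collapse, expand, mem_expandColumn]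
  grind

theorem isSVRPPn_expand (ha : 1 ≤ a) (han : a < n) (hK : IsSVRPPn lam mu n K)
    (haK : ∀ r j, a ∉ K r j) (hf : ∀ j, evenCeil (f (j + 1)) ≤ f j) :
    IsSVRPPn lam mu n (expand a f K) := by
  rw [isSVRPPn_iff_collapse ha han, collapse_expand haK]
  refine ⟨hK, fun r j => ?_, fun r j => ?_⟩
  · have := haK r (j + 1)
    have := hf j
    simp only [expand, mem_expandColumn]
    grind [evenCeil]
  · have := haK (r + 1) j
    simp only [expand, mem_expandColumn]
    grind

theorem expand_injOn (haK : ∀ r j, a ∉ K r j) (hpq : ∀ r j, a + 1 ∈ K r j ↔ p j ≤ r ∧ r < q j) :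
    {f : ℕ → ℕ | ∀ j, 2 * p j ≤ f j ∧ f j ≤ 2 * q j}.InjOn (expand a · K) := by
  intro f hf g hg hfg
  have hmem (r j x : ℕ) : x ∈ expand a f K r j ↔ x ∈ expand a g K r j := by
    rw [show expand a f K = expand a g K from hfg]
  simp only [expand, mem_expandColumn, hpq] at hmem
  funext j
  have := hf j
  have := hg j
  have hseam (r : ℕ) (hp : p j ≤ r) (hq : r < q j) :
      (2 * r + 1 ≤ f j ↔ 2 * r + 1 ≤ g j) ∧ (f j ≤ 2 * r + 1 ↔ g j ≤ 2 * r + 1) :=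
    ⟨by simpa [haK, hp, hq] using hmem r j a, by simpa [hp, hq] using hmem r j (a + 1)⟩
  have := hseam (f j / 2)
  have := hseam (g j / 2)
  omega

theorem exists_eq_expand (hb : IsBand p q) (ha : 1 ≤ a) (han : a < n) (hT : IsSVRPPn lam mu n T)
    (hpq : ∀ r j, a + 1 ∈ collapse a T r j ↔ p j ≤ r ∧ r < q j) :
    ∃ f : ℕ → ℕ, (∀ j, 2 * p j ≤ f j ∧ f j ≤ 2 * q j) ∧ (∀ j, evenCeil (f (j + 1)) ≤ f j) ∧
      expand a f (collapse a T) = T := by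
  obtain ⟨-, hrow, hcol⟩ := (isSVRPPn_iff_collapse ha han).1 hT
  have hmem (r j : ℕ) : a ∈ T r j ∨ a + 1 ∈ T r j ↔ p j ≤ r ∧ r < q j := by
    rw [← hpq, mem_collapse]
    simp [or_comm]
  choose f hpf hfq hf using fun j => exists_seam (A := (a ∈ T · j)) (B := (a + 1 ∈ T · j)) (hb.le j)
    (fun r hp hq => (hmem r j).2 ⟨hp, hq⟩) fun r => hcol r j
  refine ⟨f, fun j => ⟨hpf j, hfq j⟩, fun j => ?_, ?_⟩
  · by_contra! hlt
    have hp := hb.antitone_left (Nat.le_add_right j 1)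
    have hq := hb.antitone_right (Nat.le_add_right j 1)
    have := hpf j
    have := hfq (j + 1)
    obtain ⟨r, hr, hr'⟩ : ∃ r, f j ≤ 2 * r + 1 ∧ 2 * r + 1 ≤ f (j + 1) :=
      ⟨(f (j + 1) - 1) / 2, by grind [evenCeil]⟩
    exact hrow r j (((hf j r (by omega) (by omega)).2).2 hr)
      (((hf (j + 1) r (by omega) (by omega)).1).2 hr')
  · ext r j x
    simp only [expand, mem_expandColumn, hpq]
    simp only [mem_collapse]
    have := hf j r
    have := hmem r j
    grind

theorem sum_filter_collapse_eq_sum_seamWords {M : Type*} [AddCommMonoid M] (hb : IsBand p q)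
    (hc : ∀ j, c ≤ j → q j = 0) (ha : 1 ≤ a) (han : a < n) (hK : IsSVRPPn lam mu n K)
    (haK : ∀ r j, a ∉ K r j) (hpq : ∀ r j, a + 1 ∈ K r j ↔ p j ≤ r ∧ r < q j)
    {s : Finset (ℕ → ℕ → Finset ℕ)} (hs : ∀ T, T ∈ s ↔ IsSVRPPn lam mu n T)
    (φ : (ℕ → ℕ → Finset ℕ) → M) :
    ∑ T ∈ s with collapse a T = K, φ T = ∑ f ∈ seamWords p q c 0, φ (expand a f K) := by
  have hw (f : ℕ → ℕ) := mem_seamWords_zero (f := f) hb.le hc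
  symm
  refine sum_bij (fun f _ => expand a f K) (fun f hf => ?_) (fun f hf g hg h => ?_)
    (fun T hT => ?_) fun f _ => rfl
  · rw [mem_filter, hs]
    exact ⟨isSVRPPn_expand ha han hK haK ((hw f).1 hf).2, collapse_expand haK f⟩
  · exact expand_injOn haK hpq ((hw f).1 hf).1 ((hw g).1 hg).1 h
  · rw [mem_filter, hs] at hT
    obtain ⟨hT, rfl⟩ := hT
    obtain ⟨f, hrange, hchain, hfT⟩ := exists_eq_expand hb ha han hT hpq
    exact ⟨f, (hw f).2 ⟨hrange, hchain⟩, hfT⟩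

end Seam

section Weight

/-- The exponents that a single column `C` (as a function of the row) contributes to the monomial of
a filling: an entry `v + 1` counts once for `x_{v+1}`, an entry common to rows `r` and `r + 1` once
for `t_r`, and row `r` contributes its excess to `w_r`. -/
noncomputable def colExp {n : ℕ} (C : ℕ → Finset ℕ) : Fin n ⊕ ℕ ⊕ ℕ → ℕ
  | .inl v => if ∃ r, (v : ℕ) + 1 ∈ C r then 1 else 0
  | .inr (.inl r) => if (C r ∩ C (r + 1)).Nonempty then 1 else 0
  | .inr (.inr r) => (C r).card - 1

/-- The monomial of a single column `C`, disregarding the rows from `N` on. -/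
noncomputable def colWeight (n N : ℕ) (C : ℕ → Finset ℕ) : MvPolynomial (Fin n ⊕ ℕ ⊕ ℕ) ℤ :=
  ∏ i ∈ univ.disjSum ((range N).disjSum (range N)), MvPolynomial.X i ^ colExp C i

variable {n N : ℕ} {C D C' D' : ℕ → Finset ℕ}

theorem colWeight_mul_eq_mul
    (h : ∀ i : Fin n ⊕ ℕ ⊕ ℕ, colExp C i + colExp D i = colExp C' i + colExp D' i) :
    colWeight n N C * colWeight n N D = colWeight n N C' * colWeight n N D' := by
  simp only [colWeight, ← prod_mul_distrib, ← pow_add, h]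

theorem rename_colWeight {σ : Equiv.Perm (Fin n)}
    (h : ∀ i, colExp D (Sum.map σ id i) = colExp C i) :
    MvPolynomial.rename (Sum.map σ id) (colWeight n N C) = colWeight n N D := by
  simp only [colWeight, map_prod, map_pow, MvPolynomial.rename_X, ← h]
  exact prod_equiv (σ.sumCongr (Equiv.refl _)) (by simp [mem_disjSum]) fun _ _ => rfl

section Statistics

variable {lam mu : ℕ → ℕ} {T : ℕ → ℕ → Finset ℕ} {c : ℕ}

theorem ncard_setOf_eq_sum {P : ℕ → Prop} [DecidablePred P] (hP : ∀ j, P j → j < c) :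
    Set.ncard {j | P j} = ∑ j ∈ range c, if P j then 1 else 0 := by
  rw [← card_filter, ← Set.ncard_coe_finset]
  congr
  ext j
  simpa using hP j

theorem ircont_eq_sum_colExp (hT : ∀ r j, (T r j).Nonempty → j < c) (v : Fin n) :
    ircont T (v + 1) = ∑ j ∈ range c, colExp (T · j) (.inl v : Fin n ⊕ ℕ ⊕ ℕ) :=
  ncard_setOf_eq_sum fun j ⟨r, hr⟩ => hT r j ⟨_, hr⟩

theorem ceq_eq_sum_colExp (hT : IsSVRPP lam mu T) (hc : ∀ r j, (T r j).Nonempty → j < c) (r : ℕ) :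
    ceq lam mu T r = ∑ j ∈ range c, colExp (T · j) (.inr (.inl r) : Fin n ⊕ ℕ ⊕ ℕ) := by
  have hiff (j : ℕ) : (InShape lam mu r j ∧ InShape lam mu (r + 1) j ∧
      ∃ m, m ∈ T r j ∧ (∀ x ∈ T r j, x ≤ m) ∧ m ∈ T (r + 1) j ∧ ∀ x ∈ T (r + 1) j, m ≤ x) ↔
      (T r j ∩ T (r + 1) j).Nonempty := by
    constructor
    · rintro ⟨-, -, m, hm, -, hm', -⟩
      exact ⟨m, mem_inter.2 ⟨hm, hm'⟩⟩
    · rintro ⟨m, hmm⟩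
      obtain ⟨hm, hm'⟩ := mem_inter.1 hmm
      have hle := hT.2.2.2.2 r j (hT.inShape hm) (hT.inShape hm')
      exact ⟨hT.inShape hm, hT.inShape hm', m, hm, fun x hx => hle x hx m hm', hm', hle m hm⟩
  simp only [ceq, hiff]
  exact ncard_setOf_eq_sum fun j (hj : (T r j ∩ T (r + 1) j).Nonempty) =>
    hc r j (hj.mono inter_subset_left)

theorem exv_eq_sum_colExp (hT : IsSVRPP lam mu T) (hc : ∀ r j, (T r j).Nonempty → j < c) (r : ℕ) :
    exv lam mu T r = ∑ j ∈ range c, colExp (T · j) (.inr (.inr r) : Fin n ⊕ ℕ ⊕ ℕ) := by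
  refine sum_subset (fun j hj => mem_range.2 (hc r j (hT.2.1 r j (mem_Ico.1 hj)))) fun j _ hj => ?_
  simp [hT.1 r j (mt mem_Ico.2 hj)]

theorem monomial_eq_prod_colWeight (hlam : IsPartitionFun lam) (hN : ∀ r, N ≤ r → lam r = 0)
    (hT : IsSVRPP lam mu T) :
    (∏ v : Fin n, MvPolynomial.X (Sum.inl v) ^ ircont T ((v : ℕ) + 1)) *
      (∏ᶠ r : ℕ, MvPolynomial.X (Sum.inr (Sum.inl r)) ^ ceq lam mu T r) *
      (∏ᶠ r : ℕ, MvPolynomial.X (Sum.inr (Sum.inr r)) ^ exv lam mu T r) =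
    ∏ j ∈ range (lam 0), colWeight n N (T · j) := by
  have hc (r j : ℕ) (h : (T r j).Nonempty) : j < lam 0 :=
    hlam.inShape_lt (hT.inShape h.choose_spec)
  have hrow {e : ℕ → ℕ} {x : ℕ → MvPolynomial (Fin n ⊕ ℕ ⊕ ℕ) ℤ} (he : ∀ r, N ≤ r → e r = 0) :
      ∏ᶠ r, x r ^ e r = ∏ r ∈ range N, x r ^ e r := by
    refine finprod_eq_prod_of_mulSupport_subset _ fun r hr => ?_
    by_contra hrN
    exact hr (by simp [he r (by simpa using hrN)])
  have hempty (r j : ℕ) (hr : N ≤ r) : T r j = ∅ :=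
    hT.1 r j fun h => by simpa [hN r hr] using h.2
  rw [hrow fun r hr => ?_, hrow fun r hr => ?_]
  · simp only [colWeight]
    rw [prod_comm]
    simp only [prod_pow_eq_pow_sum, prod_disjSum, ircont_eq_sum_colExp hc,
      ceq_eq_sum_colExp (n := n) hT hc, exv_eq_sum_colExp (n := n) hT hc, mul_assoc]
  · simp [exv_eq_sum_colExp (n := n) hT hc, colExp, hempty r _ hr]
  · simp [ceq_eq_sum_colExp (n := n) hT hc, colExp, hempty r _ hr]

end Statistics
section SeamExponents

/-- `K` is a weakly increasing column without the entry `a`, whose entries `a + 1` are exactly in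
the rows `p, …, q - 1`. -/
structure IsCollapsedColumn (a p q : ℕ) (K : ℕ → Finset ℕ) : Prop where
  notMem : ∀ r, a ∉ K r
  mem_iff : ∀ r, a + 1 ∈ K r ↔ p ≤ r ∧ r < q
  finsetLE : ∀ r, FinsetLE (K r) (K (r + 1))

variable {a p q s : ℕ} {K : ℕ → Finset ℕ} {v : Fin n}

theorem IsCollapsedColumn.colExp_left (hK : IsCollapsedColumn a p q K) (hs : s ≤ 2 * q)
    (hv : (v : ℕ) + 1 = a) :
    colExp (expandColumn a s K) (.inl v : Fin n ⊕ ℕ ⊕ ℕ) = if 2 * p < s then 1 else 0 := by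
  have hiff : (∃ r, a ∈ expandColumn a s K r) ↔ 2 * p < s := by
    simp only [mem_expandColumn, hK.notMem, hK.mem_iff]
    exact ⟨by grind, fun h => ⟨p, by grind⟩⟩
  simp only [colExp, hv, hiff]

theorem IsCollapsedColumn.colExp_right (hK : IsCollapsedColumn a p q K) (hs : 2 * p ≤ s)
    (hv : (v : ℕ) + 1 = a + 1) :
    colExp (expandColumn a s K) (.inl v : Fin n ⊕ ℕ ⊕ ℕ) = if s < 2 * q then 1 else 0 := by
  have hiff : (∃ r, a + 1 ∈ expandColumn a s K r) ↔ s < 2 * q := by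
    simp only [mem_expandColumn, hK.mem_iff]
    exact ⟨by grind, fun h => ⟨q - 1, by grind⟩⟩
  simp only [colExp, hv, hiff]

theorem colExp_expandColumn_of_ne (hv : (v : ℕ) + 1 ≠ a) (hv' : (v : ℕ) + 1 ≠ a + 1) :
    colExp (expandColumn a s K) (.inl v : Fin n ⊕ ℕ ⊕ ℕ) =
      colExp K (.inl v : Fin n ⊕ ℕ ⊕ ℕ) := by
  simp only [colExp, mem_expandColumn, hv, hv', ne_eq, not_false_eq_true, and_true, false_and,
    or_false, and_false]

theorem IsCollapsedColumn.colExp_inr_inl (hK : IsCollapsedColumn a p q K) (r : ℕ) :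
    colExp (expandColumn a s K) (.inr (.inl r) : Fin n ⊕ ℕ ⊕ ℕ) +
        (if p ≤ r ∧ r + 1 < q ∧ s = 2 * r + 2 then 1 else 0) =
      colExp K (.inr (.inl r) : Fin n ⊕ ℕ ⊕ ℕ) := by
  have hmem := hK.mem_iff r
  have hmem' := hK.mem_iff (r + 1)
  have hK_iff : (K r ∩ K (r + 1)).Nonempty ↔
      (∃ x, x ≠ a + 1 ∧ x ∈ K r ∧ x ∈ K (r + 1)) ∨ p ≤ r ∧ r + 1 < q := by
    simp only [Finset.Nonempty, mem_inter]
    grind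
  have hiff : (expandColumn a s K r ∩ expandColumn a s K (r + 1)).Nonempty ↔
      (∃ x, x ≠ a + 1 ∧ x ∈ K r ∧ x ∈ K (r + 1)) ∨ p ≤ r ∧ r + 1 < q ∧ s ≠ 2 * r + 2 := by
    have := hK.notMem r
    have := hK.notMem (r + 1)
    simp only [Finset.Nonempty, mem_inter, mem_expandColumn]
    constructor
    · grind
    · rintro (h | h)
      · grind
      · by_cases hs : s ≤ 2 * r + 1
        · exact ⟨a + 1, by grind⟩
        · exact ⟨a, by grind⟩
  have hexcl : p ≤ r ∧ r + 1 < q → ¬ ∃ x, x ≠ a + 1 ∧ x ∈ K r ∧ x ∈ K (r + 1) := by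
    rintro h ⟨x, hx, hxr, hxr'⟩
    exact hx (le_antisymm (hK.finsetLE r x hxr _ (hmem'.2 (by omega)))
      (hK.finsetLE r _ (hmem.2 (by omega)) x hxr'))
  simp only [colExp, hK_iff, hiff]
  split_ifs <;> grind

theorem IsCollapsedColumn.colExp_inr_inr (hK : IsCollapsedColumn a p q K) (r : ℕ) :
    colExp (expandColumn a s K) (.inr (.inr r) : Fin n ⊕ ℕ ⊕ ℕ) =
      colExp K (.inr (.inr r) : Fin n ⊕ ℕ ⊕ ℕ) +
        if p ≤ r ∧ r < q ∧ s = 2 * r + 1 then 1 else 0 := by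
  simp only [colExp, expandColumn]
  by_cases h : a + 1 ∈ K r
  · have := card_erase_add_one h
    have := hK.notMem r
    have := (hK.mem_iff r).1 h
    rw [if_pos h, card_union_of_disjoint (by rw [disjoint_left]; split_ifs <;> grind)]
    split_ifs <;> grind
  · have := mt (hK.mem_iff r).2 h
    rw [if_neg h, if_neg (by omega), add_zero]

end SeamExponents

section SwapWeight

variable {a : ℕ} {v w : Fin n}

theorem IsCollapsedColumn.rename_colWeight_expandColumn {p q s t : ℕ} {K : ℕ → Finset ℕ}
    (hK : IsCollapsedColumn a p q K) (hpq : p ≤ q) (N : ℕ) (hv : (v : ℕ) + 1 = a)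
    (hw : (w : ℕ) + 1 = a + 1)
    (hst : s = 2 * p ∧ t = 2 * q ∨ s = 2 * q ∧ t = 2 * p ∨ s = t ∧ 2 * p < s ∧ s < 2 * q) :
    MvPolynomial.rename (Sum.map (Equiv.swap v w) id) (colWeight n N (expandColumn a s K)) =
      colWeight n N (expandColumn a t K) := by
  refine rename_colWeight ?_
  rintro (u | r | r) <;> simp only [Sum.map_inl, Sum.map_inr, id]
  · rcases eq_or_ne u v with rfl | huv
    · rw [Equiv.swap_apply_left, hK.colExp_left (by omega) hv, hK.colExp_right (by omega) hw]
      exact if_congr (by omega) rfl rfl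
    rcases eq_or_ne u w with rfl | huw
    · rw [Equiv.swap_apply_right, hK.colExp_left (by omega) hv, hK.colExp_right (by omega) hw]
      exact if_congr (by omega) rfl rfl
    · rw [Equiv.swap_apply_of_ne_of_ne huv huw, colExp_expandColumn_of_ne (by grind) (by grind),
        colExp_expandColumn_of_ne (by grind) (by grind)]
  · have hs := hK.colExp_inr_inl (n := n) (s := s) r
    have ht := hK.colExp_inr_inl (n := n) (s := t) r
    split_ifs at hs ht <;> omega
  · rw [hK.colExp_inr_inr, hK.colExp_inr_inr]
    exact congrArg _ (if_congr (by omega) rfl rfl)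

theorem IsCollapsedColumn.colWeight_expandColumn_mul {p q p' q' s t : ℕ} {K K' : ℕ → Finset ℕ}
    (hK : IsCollapsedColumn a p q K) (hK' : IsCollapsedColumn a p' q' K') (hp : p' ≤ p)
    (hq : q' ≤ q) (hpq : p < q') (N : ℕ) (hv : (v : ℕ) + 1 = a) (hw : (w : ℕ) + 1 = a + 1)
    (hst : s = 2 * q' ∧ t = 2 * q ∨ s = t ∧ 2 * p < s ∧ s < 2 * q') :
    colWeight n N (expandColumn a s K') * colWeight n N (expandColumn a (2 * p) K) =
      colWeight n N (expandColumn a (2 * p') K') * colWeight n N (expandColumn a t K) := by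
  refine colWeight_mul_eq_mul ?_
  rintro (u | r | r)
  · rcases eq_or_ne u v with rfl | huv
    · rw [hK.colExp_left (by omega) hv, hK.colExp_left (by omega) hv,
        hK'.colExp_left (by omega) hv, hK'.colExp_left (by omega) hv]
      split_ifs <;> omega
    rcases eq_or_ne u w with rfl | huw
    · rw [hK.colExp_right (by omega) hw, hK.colExp_right (by omega) hw,
        hK'.colExp_right (by omega) hw, hK'.colExp_right (by omega) hw]
      split_ifs <;> omega
    · have hu : (u : ℕ) + 1 ≠ a := by grind
      have hu' : (u : ℕ) + 1 ≠ a + 1 := by grind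
      simp only [colExp_expandColumn_of_ne hu hu']
  · have hs := hK'.colExp_inr_inl (n := n) (s := s) r
    have hs' := hK'.colExp_inr_inl (n := n) (s := 2 * p') r
    have ht := hK.colExp_inr_inl (n := n) (s := t) r
    have ht' := hK.colExp_inr_inl (n := n) (s := 2 * p) r
    split_ifs at hs hs' ht ht' <;> omega
  · simp only [hK.colExp_inr_inr, hK'.colExp_inr_inr]
    split_ifs <;> omega

theorem isSwapWeight_colWeight {p q : ℕ → ℕ} {K : ℕ → ℕ → Finset ℕ} (hb : IsBand p q)
    (hK : ∀ j, IsCollapsedColumn a (p j) (q j) (K · j)) (N : ℕ) (hv : (v : ℕ) + 1 = a)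
    (hw : (w : ℕ) + 1 = a + 1) :
    IsSwapWeight (MvPolynomial.rename (Sum.map (Equiv.swap v w) id)).toRingHom p q
      fun j s => colWeight n N (expandColumn a s (K · j)) where
  map_bot j := (hK j).rename_colWeight_expandColumn (hb.le j) N hv hw (by omega)
  map_top j := (hK j).rename_colWeight_expandColumn (hb.le j) N hv hw (by omega)
  map_mid j s hp hq := (hK j).rename_colWeight_expandColumn (hb.le j) N hv hw (by omega)
  exchange_mid j s hp hq := (hK j).colWeight_expandColumn_mul (hK (j + 1))
    (hb.antitone_left j.le_succ) (hb.antitone_right j.le_succ) (by omega) N hv hw (by omega)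
  exchange_top j h := (hK j).colWeight_expandColumn_mul (hK (j + 1))
    (hb.antitone_left j.le_succ) (hb.antitone_right j.le_succ) h N hv hw (by omega)

end SwapWeight

end Weight

section Symmetry

variable {lam mu : ℕ → ℕ} {n : ℕ}

theorem finite_setOf_isSVRPPn (hlam : IsPartitionFun lam) :
    {T : ℕ → ℕ → Finset ℕ | IsSVRPPn lam mu n T}.Finite := by
  obtain ⟨N, hN⟩ := hlam.2
  refine Set.Finite.of_injOn (f := fun T (x : Fin N × Fin (lam 0)) => T x.1 x.2)
    (t := Set.univ.pi fun _ => ↑(Icc 1 n).powerset) (fun T hT x _ => ?_) (fun T hT T' hT' h => ?_)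
    (Set.Finite.pi fun _ => finite_toSet _)
  · exact mem_coe.2 (mem_powerset.2 (hT.2 x.1 x.2))
  · funext r j
    by_cases hs : InShape lam mu r j
    · have hr : r < N := by
        by_contra! hr
        simpa [hN r hr] using hs.2
      exact congrFun h (⟨r, hr⟩, ⟨j, hlam.inShape_lt hs⟩)
    · rw [hT.1.1 r j hs, hT'.1.1 r j hs]

theorem hybridG_eq_sum_prod_colWeight (hlam : IsPartitionFun lam) {N : ℕ}
    (hN : ∀ r, N ≤ r → lam r = 0) :
    hybridG lam mu n = ∑ T ∈ (finite_setOf_isSVRPPn (mu := mu) (n := n) hlam).toFinset,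
      ∏ j ∈ range (lam 0), colWeight n N (T · j) := by
  rw [hybridG, finsum_mem_eq_finite_toFinset_sum _ (finite_setOf_isSVRPPn hlam)]
  exact sum_congr rfl fun T hT =>
    monomial_eq_prod_colWeight hlam hN ((Set.Finite.mem_toFinset _).1 hT).1

theorem IsCollapsedColumn.of_isSVRPP {K : ℕ → ℕ → Finset ℕ} (hK : IsSVRPP lam mu K) {a : ℕ}
    (haK : ∀ r j, a ∉ K r j) {p q : ℕ → ℕ} (hpq : ∀ r j, a + 1 ∈ K r j ↔ p j ≤ r ∧ r < q j)
    (j : ℕ) : IsCollapsedColumn a (p j) (q j) (K · j) where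
  notMem r := haK r j
  mem_iff r := hpq r j
  finsetLE r x hx y hy := hK.2.2.2.2 r j (hK.inShape hx) (hK.inShape hy) x hx y hy

theorem rename_swap_hybridG (hlam : IsPartitionFun lam) (hmu : IsPartitionFun mu)
    (hsub : ∀ r, mu r ≤ lam r) {v w : Fin n} (hvw : (w : ℕ) = v + 1) :
    MvPolynomial.rename (Sum.map (Equiv.swap v w) id) (hybridG lam mu n) = hybridG lam mu n := by
  obtain ⟨N, hN⟩ := hlam.2
  have ha : 1 ≤ (w : ℕ) := by omega
  rw [hybridG_eq_sum_prod_colWeight hlam hN,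
    ← sum_fiberwise_of_maps_to fun T => mem_image_of_mem (collapse w), map_sum]
  refine sum_congr rfl fun K hK => ?_
  obtain ⟨T, hT, rfl⟩ := mem_image.1 hK
  rw [Set.Finite.mem_toFinset] at hT
  have hcol := ((isSVRPPn_iff_collapse ha w.isLt).1 hT).1
  obtain ⟨p, q, hb, hq, hpq⟩ := exists_isBand_mem_iff hlam hmu hsub hcol.1 (w + 1)
  rw [sum_filter_collapse_eq_sum_seamWords hb hq ha w.isLt hcol notMem_collapse hpq
    fun _ => (finite_setOf_isSVRPPn hlam).mem_toFinset]
  have hW := isSwapWeight_colWeight hb (.of_isSVRPP hcol.1 notMem_collapse hpq) N hvw.symm rfl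
  exact (congrArg _ (sum_seamWords _ _ _)).trans
    ((hW.map_transfer hb _).trans (sum_seamWords _ _ _).symm)

theorem rename_sumMap_eq_of_adjacent_swap {κ R : Type*} [CommSemiring R]
    {f : MvPolynomial (Fin n ⊕ κ) R}
    (hf : ∀ v w : Fin n, (w : ℕ) = v + 1 →
      MvPolynomial.rename (Sum.map (Equiv.swap v w) id) f = f) (σ : Equiv.Perm (Fin n)) :
    MvPolynomial.rename (Sum.map σ id) f = f := by
  rcases n with _ | m
  · have : Sum.map σ id = (id : Fin 0 ⊕ κ → Fin 0 ⊕ κ) := by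
      rw [Subsingleton.elim σ 1, Equiv.Perm.coe_one, Sum.map_id_id]
    rw [this, MvPolynomial.rename_id_apply]
  have hσ : σ ∈ Submonoid.closure (Set.range fun i : Fin m => Equiv.swap i.castSucc i.succ) := by
    rw [Equiv.Perm.mclosure_swap_castSucc_succ]
    exact Submonoid.mem_top σ
  induction hσ using Submonoid.closure_induction with
  | mem _ h =>
    obtain ⟨i, rfl⟩ := h
    exact hf _ _ (by simp)
  | one => rw [Equiv.Perm.coe_one, Sum.map_id_id, MvPolynomial.rename_id_apply]
  | mul σ τ _ _ hσ hτ =>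
    have : Sum.map (σ * τ) id = Sum.map σ id ∘ (Sum.map τ id : Fin (m + 1) ⊕ κ → _) := by
      rw [Sum.map_comp_map, Equiv.Perm.coe_mul, Function.comp_id]
    rw [this, ← MvPolynomial.rename_rename, hτ, hσ]

end Symmetry

end HybridGrothendieck

/-- For any skew shape `lam/mu` and any positive integer `n`, the hybrid
Grothendieck polynomial `G_{lam/mu}(x_1,…,x_n; t; w)` is symmetric in the `x` variables:
renaming the `x` variables by any permutation `σ` of `{1,…,n}` leaves it unchanged. -/
theorem hybridG_symmetric (lam mu : ℕ → ℕ)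
    (hlam : IsPartitionFun lam) (hmu : IsPartitionFun mu)
    (hsub : ∀ i, mu i ≤ lam i) (n : ℕ) (hn : 1 ≤ n) (σ : Equiv.Perm (Fin n)) :
    MvPolynomial.rename (Sum.map (⇑σ) id) (hybridG lam mu n) = hybridG lam mu n :=
  HybridGrothendieck.rename_sumMap_eq_of_adjacent_swap
    (fun _ _ hvw => HybridGrothendieck.rename_swap_hybridG hlam hmu hsub hvw) σ
end

section
/- For any skew shape λ/μ and any positive integer i, there exists an involution Φ_i on SVRPP(λ/μ) such that for every T ∈ SVRPP(λ/μ): ceq(Φ_i(T)) = ceq(T), ex(Φ_i(T)) = ex(T), and ircont(Φ_i(T)) is obtained from ircont(T) by exchanging its i-th and (i+1)-th entries. -/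
open scoped Classical

section SVRPP

variable {lam mu : ℕ → ℕ} {T : ℕ → ℕ → Finset ℕ} {r r' j j' x y : ℕ}

theorem InShape.of_le_of_le {r₁ j₁ r₂ j₂ : ℕ} (hlam : IsPartitionFun lam) (hmu : IsPartitionFun mu)
    (h₁ : InShape lam mu r₁ j₁) (h₂ : InShape lam mu r₂ j₂) (hr₁ : r₁ ≤ r) (hr₂ : r ≤ r₂)
    (hj₁ : j₁ ≤ j) (hj₂ : j ≤ j₂) : InShape lam mu r j :=
  ⟨(hmu.antitone hr₁).trans (h₁.1.trans hj₁), hj₂.trans_lt (h₂.2.trans_le (hlam.antitone hr₂))⟩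

namespace IsSVRPP

theorem inShape_of_mem (hT : IsSVRPP lam mu T) (hx : x ∈ T r j) : InShape lam mu r j := by
  by_contra h
  simp [hT.1 r j h] at hx

theorem le_of_mem_row (hT : IsSVRPP lam mu T) (hj : j < j') (hx : x ∈ T r j)
    (hy : y ∈ T r j') : x ≤ y := by
  induction j', hj using Nat.le_induction generalizing y with
  | base => exact hT.2.2.2.1 r j (hT.inShape_of_mem hx) (hT.inShape_of_mem hy) x hx y hy
  | succ k hjk ih =>
    have hk : InShape lam mu r k :=
      ⟨(hT.inShape_of_mem hx).1.trans (Nat.le_of_succ_le hjk),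
        (Nat.lt_succ_self k).trans (hT.inShape_of_mem hy).2⟩
    obtain ⟨z, hz⟩ := hT.2.1 r k hk
    exact (ih hz).trans (hT.2.2.2.1 r k hk (hT.inShape_of_mem hy) z hz y hy)

theorem le_of_mem_col (hlam : IsPartitionFun lam) (hmu : IsPartitionFun mu)
    (hT : IsSVRPP lam mu T) (hr : r < r') (hx : x ∈ T r j) (hy : y ∈ T r' j) : x ≤ y := by
  induction r', hr using Nat.le_induction generalizing y with
  | base => exact hT.2.2.2.2 r j (hT.inShape_of_mem hx) (hT.inShape_of_mem hy) x hx y hy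
  | succ k hrk ih =>
    have hk : InShape lam mu k j :=
      (hT.inShape_of_mem hx).of_le_of_le hlam hmu (hT.inShape_of_mem hy)
        (Nat.le_of_succ_le hrk) k.le_succ le_rfl le_rfl
    obtain ⟨z, hz⟩ := hT.2.1 k j hk
    exact (ih hz).trans (hT.2.2.2.2 k j hk (hT.inShape_of_mem hy) z hz y hy)

theorem le_of_mem (hlam : IsPartitionFun lam) (hmu : IsPartitionFun mu) (hT : IsSVRPP lam mu T)
    (hr : r ≤ r') (hj : j ≤ j') (hne : r < r' ∨ j < j') (hx : x ∈ T r j) (hy : y ∈ T r' j') :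
    x ≤ y := by
  rcases hr.eq_or_lt with rfl | hlt
  · exact hT.le_of_mem_row (hne.resolve_left (lt_irrefl r)) hx hy
  rcases hj.eq_or_lt with rfl | hlt'
  · exact hT.le_of_mem_col hlam hmu hlt hx hy
  obtain ⟨z, hz⟩ := hT.2.1 r j' <| (hT.inShape_of_mem hx).of_le_of_le hlam hmu
    (hT.inShape_of_mem hy) le_rfl hr hj le_rfl
  exact (hT.le_of_mem_row hlt' hx hz).trans (hT.le_of_mem_col hlam hmu hlt hz hy)

end IsSVRPP

end SVRPP

namespace BenderKnuth

section Newman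

variable {α : Type*} {r : α → α → Prop} {x y z : α}

/-- `y` is a normal form of `x` for the rewriting relation `r`. -/
def IsNormalForm (r : α → α → Prop) (x y : α) : Prop :=
  Relation.ReflTransGen r x y ∧ ∀ z, ¬ r y z

theorem exists_isNormalForm (hr : WellFounded (flip r)) (x : α) : ∃ y, IsNormalForm r x y := by
  obtain ⟨y, hxy, hmin⟩ := hr.has_min {y | Relation.ReflTransGen r x y} ⟨x, .refl⟩
  exact ⟨y, hxy, fun z hyz => hmin z (hxy.tail hyz) hyz⟩

/-- The normal form of `x` for `r`, with junk value `x` if there is none. -/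
noncomputable def normalForm (r : α → α → Prop) (x : α) : α :=
  if h : ∃ y, IsNormalForm r x y then h.choose else x

theorem isNormalForm_normalForm (hr : WellFounded (flip r)) (x : α) :
    IsNormalForm r x (normalForm r x) := by
  have h := exists_isNormalForm hr x
  rw [normalForm, dif_pos h]
  exact h.choose_spec

/-- Newman's diamond lemma. -/
theorem IsNormalForm.unique (hr : WellFounded (flip r))
    (hconf : ∀ x y z, r x y → r x z → Relation.Join (Relation.ReflTransGen r) y z)
    (hy : IsNormalForm r x y) (hz : IsNormalForm r x z) : y = z := by
  induction x using hr.induction generalizing y z with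
  | _ x ih =>
    rcases hy.1.cases_head with rfl | ⟨y₁, hxy₁, hy₁⟩
    · rcases hz.1.cases_head with rfl | ⟨z₁, hxz₁, -⟩
      · rfl
      · exact absurd hxz₁ (hy.2 z₁)
    · rcases hz.1.cases_head with rfl | ⟨z₁, hxz₁, hz₁⟩
      · exact absurd hxy₁ (hz.2 y₁)
      · obtain ⟨c, hyc, hzc⟩ := hconf x y₁ z₁ hxy₁ hxz₁
        obtain ⟨d, hcd, hd⟩ := exists_isNormalForm hr c
        calc y = d := ih y₁ hxy₁ ⟨hy₁, hy.2⟩ ⟨hyc.trans hcd, hd⟩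
          _ = z := (ih z₁ hxz₁ ⟨hz₁, hz.2⟩ ⟨hzc.trans hcd, hd⟩).symm

end Newman

section SwapStep

variable {α : Type*} {D : ℕ → α → α → Prop} {σ : α → α} {w w' : ℕ → α}

/-- One sorting step on the infinite word `w`: letters at adjacent positions `j` and `j + 1` that
form a descent, `D j (w j) (w (j + 1))`, are exchanged. -/
def SwapStep (D : ℕ → α → α → Prop) (w w' : ℕ → α) : Prop :=
  ∃ j, D j (w j) (w (j + 1)) ∧ w' = w ∘ Equiv.swap j (j + 1)

theorem wellFounded_flip_swapStep {n : ℕ} (wt : α → ℕ) (hwt : ∀ j x y, D j x y → wt y < wt x)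
    (hn : ∀ j x y, D j x y → j < n) : WellFounded (flip (SwapStep D)) := by
  have hlex : WellFounded (Pi.Lex (· < ·) (· < ·) : (Fin n → ℕ) → (Fin n → ℕ) → Prop) :=
    Pi.Lex.wellFounded _ fun _ => wellFounded_lt
  refine (hlex.onFun (f := fun (w : ℕ → α) (k : Fin n) => wt (w k))).mono ?_
  rintro _ w ⟨j, hj, rfl⟩
  refine ⟨⟨j, hn _ _ _ hj⟩, fun k (hk : (k : ℕ) < j) => ?_, ?_⟩
  · simp only [Function.comp_apply,
      Equiv.swap_apply_of_ne_of_ne hk.ne (hk.trans (Nat.lt_succ_self j)).ne]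
  · simpa using hwt _ _ _ hj

theorem join_swap_of_add_one_lt {j k : ℕ} (hjk : j + 1 < k) (hj : D j (w j) (w (j + 1)))
    (hk : D k (w k) (w (k + 1))) :
    Relation.Join (Relation.ReflTransGen (SwapStep D))
      (w ∘ Equiv.swap j (j + 1)) (w ∘ Equiv.swap k (k + 1)) := by
  have hcomm : Equiv.swap j (j + 1) * Equiv.swap k (k + 1) =
      Equiv.swap k (k + 1) * Equiv.swap j (j + 1) :=
    (Equiv.Perm.disjoint_swap_swap (by simp; omega)).commute
  refine ⟨w ∘ (Equiv.swap j (j + 1) * Equiv.swap k (k + 1) : Equiv.Perm ℕ),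
    .single ⟨k, ?_, rfl⟩, .single ⟨j, ?_, by rw [hcomm]; rfl⟩⟩
  · simpa [Equiv.swap_apply_of_ne_of_ne (show k ≠ j by omega) (show k ≠ j + 1 by omega),
      Equiv.swap_apply_of_ne_of_ne (show k + 1 ≠ j by omega) (show k + 1 ≠ j + 1 by omega)]
  · simpa [Equiv.swap_apply_of_ne_of_ne (show j ≠ k by omega) (show j ≠ k + 1 by omega),
      Equiv.swap_apply_of_ne_of_ne (show j + 1 ≠ k by omega) (show j + 1 ≠ k + 1 by omega)]

/-- `x y z` at positions `j, j + 1, j + 2` can be sorted to `z y x` starting with either descent. -/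
def BraidClosed (D : ℕ → α → α → Prop) : Prop :=
  ∀ j x y z, D j x y → D (j + 1) y z →
    D j x z ∧ D (j + 1) x z ∧ D (j + 1) x y ∧ D j y z

theorem join_swap_succ (hD : BraidClosed D) {j : ℕ} (hj : D j (w j) (w (j + 1)))
    (hj' : D (j + 1) (w (j + 1)) (w (j + 2))) :
    Relation.Join (Relation.ReflTransGen (SwapStep D))
      (w ∘ Equiv.swap j (j + 1)) (w ∘ Equiv.swap (j + 1) (j + 2)) := by
  obtain ⟨hxz, hxz', hxy', hyz⟩ := hD _ _ _ _ hj hj'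
  have hbraid : Equiv.swap j (j + 1) * Equiv.swap (j + 1) (j + 2) * Equiv.swap j (j + 1) =
      Equiv.swap (j + 1) (j + 2) * Equiv.swap j (j + 1) * Equiv.swap (j + 1) (j + 2) := by
    rw [Equiv.swap_mul_swap_mul_swap (by omega) (by omega), Equiv.swap_comm j (j + 1),
      Equiv.swap_comm (j + 1) (j + 2), Equiv.swap_mul_swap_mul_swap (by omega) (by omega),
      Equiv.swap_comm]
  have hfix : Equiv.swap j (j + 1) (j + 2) = j + 2 :=
    Equiv.swap_apply_of_ne_of_ne (by omega) (by omega)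
  have hfix' : Equiv.swap (j + 1) (j + 2) j = j :=
    Equiv.swap_apply_of_ne_of_ne (by omega) (by omega)
  refine ⟨w ∘ (Equiv.swap j (j + 1) * Equiv.swap (j + 1) (j + 2) * Equiv.swap j (j + 1) :
      Equiv.Perm ℕ),
    .head ⟨j + 1, ?_, rfl⟩ (.single ⟨j, ?_, rfl⟩),
    .head ⟨j, ?_, rfl⟩ (.single ⟨j + 1, ?_, by rw [hbraid]; rfl⟩)⟩ <;>
  simpa [hfix, hfix']

theorem join_of_swapStep (hD : BraidClosed D) {u v : ℕ → α} (hu : SwapStep D w u)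
    (hv : SwapStep D w v) : Relation.Join (Relation.ReflTransGen (SwapStep D)) u v := by
  obtain ⟨j, hj, rfl⟩ := hu
  obtain ⟨k, hk, rfl⟩ := hv
  wlog hjk : j ≤ k generalizing j k
  · exact Relation.Join.symm.symm _ _ (this k hk j hj (by omega))
  rcases (show k = j ∨ k = j + 1 ∨ j + 1 < k by omega) with rfl | rfl | hlt
  · exact ⟨_, .refl, .refl⟩
  · exact join_swap_succ hD hj hk
  · exact join_swap_of_add_one_lt hlt hj hk

theorem exists_perm_of_reflTransGen_swapStep (h : Relation.ReflTransGen (SwapStep D) w w') :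
    ∃ π : Equiv.Perm ℕ, w' = w ∘ π := by
  induction h with
  | refl => exact ⟨1, rfl⟩
  | tail _ hstep ih =>
    obtain ⟨π, rfl⟩ := ih
    obtain ⟨j, -, rfl⟩ := hstep
    exact ⟨π * Equiv.swap j (j + 1), rfl⟩

theorem ncard_eq_of_reflTransGen_swapStep (h : Relation.ReflTransGen (SwapStep D) w w')
    (p : α → Prop) : {j | p (w' j)}.ncard = {j | p (w j)}.ncard := by
  obtain ⟨π, rfl⟩ := exists_perm_of_reflTransGen_swapStep h
  exact Set.ncard_preimage_of_injective_subset_range (s := {j | p (w j)}) π.injective (by simp)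

theorem SwapStep.reverse (hσ : ∀ j x y, D j x y → D j (σ y) (σ x)) (h : SwapStep D w w') :
    SwapStep D (σ ∘ w') (σ ∘ w) := by
  obtain ⟨j, hj, rfl⟩ := h
  refine ⟨j, by simpa using hσ _ _ _ hj, ?_⟩
  rw [Function.comp_assoc, Function.comp_assoc, ← Equiv.Perm.coe_mul, Equiv.swap_mul_self,
    Equiv.Perm.coe_one, Function.comp_id]

/-- Sorting steps reversed letterwise by `σ` are again sorting steps, so `w` is recovered from the
normal form of `σ ∘ w`. -/
theorem IsNormalForm.reverse (hσ : ∀ j x y, D j x y → D j (σ y) (σ x))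
    (hinv : Function.Involutive σ) (hw : ∀ v, ¬ SwapStep D w v)
    (h : IsNormalForm (SwapStep D) (σ ∘ w) w') : IsNormalForm (SwapStep D) (σ ∘ w') w := by
  have hrev : Relation.ReflTransGen (SwapStep D) (σ ∘ w') (σ ∘ σ ∘ w) :=
    Relation.reflTransGen_swap.1
      (Relation.ReflTransGen.lift (r := SwapStep D) (σ ∘ ·) (fun _ _ => SwapStep.reverse hσ)
        _ _ h.1)
  rw [← Function.comp_assoc, hinv.comp_self, Function.id_comp] at hrev
  exact ⟨hrev, hw⟩

end SwapStep

/-- The shape of a column as seen by the entries `i` and `i + 1`: it contains neither of them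
(`blank`), only `i` (`one`), only `i + 1` (`two`), or both (`mix s`). The cut `s` of a mixed column
is measured in doubled row coordinates: `s = 2 * r` if `i + 1` starts in row `r` just below the last
`i`, and `s = 2 * r + 1` if the box in row `r` contains both. -/
inductive Letter
  | blank
  | one
  | two
  | mix (s : ℕ)

namespace Letter

variable {i r s : ℕ} {l x y : Letter} {a b : ℕ → ℕ} {w w' : ℕ → Letter}

/-- Exchange of the columns containing only `i` with those containing only `i + 1`. -/
def flip : Letter → Letter
  | one => two
  | two => one
  | l => l

theorem flip_involutive : Function.Involutive flip := by rintro (_ | _ | _ | _) <;> rfl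

theorem flip_eq_mix_iff : l.flip = mix s ↔ l = mix s := by cases l <;> simp [flip]

/-- The column contains `i`. The condition that it contains `i + 1` is `l.flip.HasLow`. -/
def HasLow : Letter → Prop
  | blank | two => False
  | one | mix _ => True

/-- The subset of `{i, i + 1}` that an active box in row `r` of a column of type `l` contains. -/
def cell (i : ℕ) : Letter → ℕ → Finset ℕ
  | blank, _ => ∅
  | one, _ => {i}
  | two, _ => {i + 1}
  | mix s, r => if s ≤ 2 * r then {i + 1} else if s = 2 * r + 1 then {i, i + 1} else {i}

theorem cell_subset (l : Letter) (r : ℕ) : l.cell i r ⊆ {i, i + 1} := by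
  cases l <;> simp only [cell] <;> (try split_ifs) <;> simp

theorem left_mem_cell_mix : i ∈ (mix s).cell i r ↔ 2 * r < s := by
  simp only [cell]; split_ifs <;> simp <;> omega

theorem right_mem_cell_mix : i + 1 ∈ (mix s).cell i r ↔ s ≤ 2 * r + 1 := by
  simp only [cell]; split_ifs <;> simp <;> omega

theorem cell_nonempty (hl : l ≠ blank) : (l.cell i r).Nonempty := by
  cases l with
  | blank => exact absurd rfl hl
  | one => exact Finset.singleton_nonempty _
  | two => exact Finset.singleton_nonempty _
  | mix s => simp only [cell]; split_ifs <;> simp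

theorem card_cell (hl : l ≠ blank) :
    (l.cell i r).card = 1 + if l = mix (2 * r + 1) then 1 else 0 := by
  cases l with
  | blank => exact absurd rfl hl
  | one => simp [cell]
  | two => simp [cell]
  | mix s => simp only [cell, mix.injEq]; split_ifs <;> first | omega | simp

/-- Columns of type `l` are possible if exactly the rows in `[a, b)` meet `{i, i + 1}`. -/
def FitsIn (a b : ℕ) : Letter → Prop
  | blank => b ≤ a
  | one | two => a < b
  | mix s => 2 * a < s ∧ s < 2 * b

theorem FitsIn.flip {a b : ℕ} (h : l.FitsIn a b) : l.flip.FitsIn a b := by cases l <;> exact h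

theorem FitsIn.ne_blank {a b : ℕ} (h : l.FitsIn a b) (hr : a ≤ r ∧ r < b) : l ≠ blank := by
  rintro rfl
  simp only [FitsIn] at h
  omega

/-- `x` and `y`, one of which is not mixed, are out of order in neighbouring columns that have
exactly the rows of `[a, b)` in common. -/
def OutOfOrder (a b : ℕ) : Letter → Letter → Prop
  | two, one => a < b
  | two, mix s | mix s, one => 2 * a < s ∧ s < 2 * b
  | _, _ => False

/-- A descent at columns `j` and `j + 1`, where `[a j, b j)` is the interval of rows in which column
`j` meets `{i, i + 1}`. -/
def IsDescent (a b : ℕ → ℕ) (j : ℕ) (x y : Letter) : Prop :=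
  a (j + 1) ≤ a j ∧ b (j + 1) ≤ b j ∧ OutOfOrder (a j) (b (j + 1)) x y

theorem OutOfOrder.lt {a b : ℕ} (h : OutOfOrder a b x y) : a < b := by
  cases x <;> cases y <;> simp only [OutOfOrder] at h <;> omega

theorem OutOfOrder.flip {a b : ℕ} (h : OutOfOrder a b x y) : OutOfOrder a b y.flip x.flip := by
  cases x <;> cases y <;> exact h

theorem IsDescent.flip {j : ℕ} (h : IsDescent a b j x y) : IsDescent a b j y.flip x.flip :=
  ⟨h.1, h.2.1, h.2.2.flip⟩

theorem braidClosed_isDescent : BraidClosed (IsDescent a b) := by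
  rintro j x y z ⟨ha, hb, hxy⟩ ⟨ha', hb', hyz⟩
  cases x <;> cases y <;> cases z <;> simp only [OutOfOrder] at hxy hyz
  simp only [IsDescent, OutOfOrder]
  omega

/-- Termination measure for sorting. -/
def weight : Letter → ℕ
  | two => 2
  | mix _ => 1
  | blank | one => 0

theorem IsDescent.weight_lt {j : ℕ} (h : IsDescent a b j x y) : y.weight < x.weight := by
  obtain ⟨-, -, h⟩ := h
  cases x <;> cases y <;> simp only [OutOfOrder] at h <;> simp [weight]

theorem IsDescent.fitsIn {j : ℕ} (h : IsDescent a b j x y) :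
    y.FitsIn (a j) (b j) ∧ x.FitsIn (a (j + 1)) (b (j + 1)) := by
  obtain ⟨ha, hb, h⟩ := h
  cases x <;> cases y <;> simp only [OutOfOrder] at h <;> simp only [FitsIn] <;> omega

theorem IsDescent.exists_row {j : ℕ} (h : IsDescent a b j x y) :
    ∃ r, a j ≤ r ∧ r < b (j + 1) ∧ i + 1 ∈ x.cell i r ∧ i ∈ y.cell i r := by
  obtain ⟨-, -, h⟩ := h
  have hlt := h.lt
  cases x <;> cases y <;> simp only [OutOfOrder] at h
  · exact ⟨a j, by simpa [cell] using hlt⟩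
  · exact ⟨a j, le_rfl, hlt, by simp [cell], left_mem_cell_mix.2 h.1⟩
  · exact ⟨b (j + 1) - 1, by omega, by omega, right_mem_cell_mix.2 (by omega), by simp [cell]⟩

theorem OutOfOrder.of_mem_cell {a b a' b' : ℕ} (hx : x.FitsIn a b') (hy : y.FitsIn a' b)
    (hmix : ∀ s t, x = mix s → y = mix t → s ≤ 2 * r + 1 → t ≤ 2 * r)
    (har : a ≤ r) (hrb : r < b) (hrx : i + 1 ∈ x.cell i r) (hry : i ∈ y.cell i r) :
    OutOfOrder a b x y := by
  cases x with
  | blank | one => simp [cell] at hrx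
  | two =>
    cases y with
    | blank | two => simp [cell] at hry
    | one => exact har.trans_lt hrb
    | mix t =>
      rw [left_mem_cell_mix] at hry
      exact ⟨by omega, hy.2⟩
  | mix s =>
    rw [right_mem_cell_mix] at hrx
    cases y with
    | blank | two => simp [cell] at hry
    | one => exact ⟨hx.1, by omega⟩
    | mix t =>
      rw [left_mem_cell_mix] at hry
      exact absurd hry (hmix s t rfl rfl hrx).not_gt

theorem FitsIn.eq_of_cell_eq {a b : ℕ} (hx : x.FitsIn a b) (hy : y.FitsIn a b)
    (h : ∀ r, a ≤ r → r < b → x.cell i r = y.cell i r) : x = y := by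
  have hleft (r) (har : a ≤ r) (hrb : r < b) : i ∈ x.cell i r ↔ i ∈ y.cell i r := by
    rw [h r har hrb]
  have hright (r) (har : a ≤ r) (hrb : r < b) : i + 1 ∈ x.cell i r ↔ i + 1 ∈ y.cell i r := by
    rw [h r har hrb]
  have hfirst := hleft a le_rfl
  have hlast := hright (b - 1)
  cases x with
  | mix s =>
    cases y with
    | mix t =>
      have hs := hleft (s / 2)
      have hs' := hright (s / 2)
      have ht := hleft (t / 2)
      have ht' := hright (t / 2)
      simp only [FitsIn, left_mem_cell_mix, right_mem_cell_mix, mix.injEq] at *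
      omega
    | _ =>
      simp only [FitsIn, left_mem_cell_mix, right_mem_cell_mix] at *
      simp [cell] at hfirst hlast
      omega
  | _ =>
    cases y <;> first
      | rfl
      | simp only [FitsIn, left_mem_cell_mix, right_mem_cell_mix] at *
        simp [cell] at hfirst hlast
        omega

theorem left_notMem_cell_of_right_mem {r' : ℕ} (hr : r < r') (h : i + 1 ∈ l.cell i r) :
    i ∉ l.cell i r' := by
  cases l with
  | mix s => rw [right_mem_cell_mix] at h; rw [left_mem_cell_mix]; omega
  | _ => simp [cell] at h ⊢

theorem disjoint_cell_cell_succ_iff (hl : l ≠ blank) :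
    Disjoint (l.cell i r) (l.cell i (r + 1)) ↔ l = mix (2 * r + 2) := by
  cases l with
  | blank => exact absurd rfl hl
  | one | two => simp [cell]
  | mix s =>
    simp only [cell, mix.injEq]
    split_ifs <;> simp <;> omega

/-- The words describing fillings: the letters fit the columns, and for mixed columns `j < k` no row
allows an `i + 1` in column `j` together with an `i` in column `k`. -/
structure IsAdmissible (a b : ℕ → ℕ) (w : ℕ → Letter) : Prop where
  fitsIn : ∀ j, (w j).FitsIn (a j) (b j)
  cut_le : ∀ ⦃j k s t⦄, j < k → w j = mix s → w k = mix t → ∀ r, s ≤ 2 * r + 1 → t ≤ 2 * r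

theorem IsAdmissible.flip (h : IsAdmissible a b w) : IsAdmissible a b (Letter.flip ∘ w) where
  fitsIn j := (h.fitsIn j).flip
  cut_le _ _ _ _ hjk hj hk := h.cut_le hjk (flip_eq_mix_iff.1 hj) (flip_eq_mix_iff.1 hk)

theorem IsAdmissible.swapStep (h : IsAdmissible a b w) (hstep : SwapStep (IsDescent a b) w w') :
    IsAdmissible a b w' := by
  obtain ⟨j, hj, rfl⟩ := hstep
  constructor
  · intro k
    rcases eq_or_ne k j with rfl | hkj
    · simpa using hj.fitsIn.1
    rcases eq_or_ne k (j + 1) with rfl | hkj'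
    · simpa using hj.fitsIn.2
    · simpa [Equiv.swap_apply_of_ne_of_ne hkj hkj'] using h.fitsIn k
  · intro k l s t hkl hk hl
    refine h.cut_le ?_ hk hl
    by_contra hnlt
    obtain ⟨rfl, rfl⟩ : k = j ∧ l = j + 1 := by
      simp only [Equiv.swap_apply_def] at hnlt
      split_ifs at hnlt <;> omega
    simp only [Function.comp_apply, Equiv.swap_apply_left, Equiv.swap_apply_right] at hk hl
    simp only [IsDescent, hk, hl, OutOfOrder, and_false] at hj

theorem IsAdmissible.reflTransGen (h : IsAdmissible a b w)
    (hw : Relation.ReflTransGen (SwapStep (IsDescent a b)) w w') : IsAdmissible a b w' := by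
  induction hw with
  | refl => exact h
  | tail _ hstep ih => exact ih.swapStep hstep

end Letter

section Active

variable {lam mu : ℕ → ℕ} {T : ℕ → ℕ → Finset ℕ} {i r j : ℕ}

/-- The box in row `r` and column `j` contains one of the entries `i`, `i + 1` acted upon. -/
def IsActive (i : ℕ) (T : ℕ → ℕ → Finset ℕ) (r j : ℕ) : Prop :=
  (T r j ∩ {i, i + 1}).Nonempty

/-- The first row in which column `j` is active. -/
noncomputable def top (i : ℕ) (T : ℕ → ℕ → Finset ℕ) (j : ℕ) : ℕ :=
  sInf {r | IsActive i T r j}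

/-- The row after the last one in which column `j` is active. -/
noncomputable def bot (i : ℕ) (T : ℕ → ℕ → Finset ℕ) (j : ℕ) : ℕ :=
  sInf {r | ∀ r', r ≤ r' → ¬ IsActive i T r' j}

theorem isActive_iff_exists : IsActive i T r j ↔ ∃ x ∈ T r j, i ≤ x ∧ x ≤ i + 1 := by
  simp only [IsActive, Finset.Nonempty, Finset.mem_inter, Finset.mem_insert, Finset.mem_singleton]
  exact exists_congr fun x => and_congr_right fun _ => by omega

theorem isActive_of_left_mem (h : i ∈ T r j) : IsActive i T r j := ⟨i, by simp [h]⟩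

theorem isActive_of_right_mem (h : i + 1 ∈ T r j) : IsActive i T r j := ⟨i + 1, by simp [h]⟩

theorem IsActive.mem_or_mem (h : IsActive i T r j) : i ∈ T r j ∨ i + 1 ∈ T r j := by
  obtain ⟨x, hx⟩ := h
  simp only [Finset.mem_inter, Finset.mem_insert, Finset.mem_singleton] at hx
  rcases hx with ⟨hx, rfl | rfl⟩ <;> simp [hx]

theorem IsActive.inShape (hT : IsSVRPP lam mu T) (h : IsActive i T r j) : InShape lam mu r j := by
  obtain ⟨x, hx⟩ := h
  exact hT.inShape_of_mem (Finset.mem_inter.1 hx).1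

theorem IsActive.of_le_of_le {r₁ j₁ r₂ j₂ : ℕ} (hlam : IsPartitionFun lam)
    (hmu : IsPartitionFun mu) (hT : IsSVRPP lam mu T) (h₁ : IsActive i T r₁ j₁)
    (h₂ : IsActive i T r₂ j₂) (hr₁ : r₁ ≤ r) (hr₂ : r ≤ r₂) (hj₁ : j₁ ≤ j) (hj₂ : j ≤ j₂) :
    IsActive i T r j := by
  by_cases heq₁ : r₁ = r ∧ j₁ = j
  · rwa [← heq₁.1, ← heq₁.2]
  by_cases heq₂ : r = r₂ ∧ j = j₂
  · rwa [heq₂.1, heq₂.2]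
  obtain ⟨z, hz⟩ := hT.2.1 r j <|
    (h₁.inShape hT).of_le_of_le hlam hmu (h₂.inShape hT) hr₁ hr₂ hj₁ hj₂
  obtain ⟨x, hx, hix, -⟩ := isActive_iff_exists.1 h₁
  obtain ⟨y, hy, -, hyi⟩ := isActive_iff_exists.1 h₂
  have hxz : x ≤ z := hT.le_of_mem hlam hmu hr₁ hj₁ (by omega) hx hz
  have hzy : z ≤ y := hT.le_of_mem hlam hmu hr₂ hj₂ (by omega) hz hy
  exact isActive_iff_exists.2 ⟨z, hz, hix.trans hxz, hzy.trans hyi⟩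

theorem isActive_iff (hlam : IsPartitionFun lam) (hmu : IsPartitionFun mu)
    (hT : IsSVRPP lam mu T) : IsActive i T r j ↔ top i T j ≤ r ∧ r < bot i T j := by
  constructor
  · intro h
    obtain ⟨N, hN⟩ := hlam.2
    have hbot : ∀ r', bot i T j ≤ r' → ¬ IsActive i T r' j :=
      Nat.sInf_mem (s := {r | ∀ r', r ≤ r' → ¬ IsActive i T r' j})
        ⟨N, fun r' hr' h' => by simpa [hN r' hr'] using (h'.inShape hT).2⟩
    exact ⟨Nat.sInf_le h, not_le.1 fun hr => hbot r hr h⟩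
  · rintro ⟨htop, hbot⟩
    obtain ⟨r', hr', h'⟩ : ∃ r', r ≤ r' ∧ IsActive i T r' j := by
      simpa using Nat.notMem_of_lt_sInf hbot
    have htop' : IsActive i T (top i T j) j :=
      Nat.sInf_mem (s := {r | IsActive i T r j}) ⟨r', h'⟩
    exact htop'.of_le_of_le hlam hmu hT h' htop hr' le_rfl le_rfl

theorem top_le_top_and_bot_le_bot (hlam : IsPartitionFun lam) (hmu : IsPartitionFun mu)
    (hT : IsSVRPP lam mu T) (h : IsActive i T r j) (h' : IsActive i T r (j + 1)) :
    top i T (j + 1) ≤ top i T j ∧ bot i T (j + 1) ≤ bot i T j := by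
  have hr := (isActive_iff hlam hmu hT).1 h
  have hr' := (isActive_iff hlam hmu hT).1 h'
  have hfirst : IsActive i T (top i T j) j :=
    (isActive_iff hlam hmu hT).2 ⟨le_rfl, by omega⟩
  have hlast : IsActive i T (bot i T (j + 1) - 1) (j + 1) :=
    (isActive_iff hlam hmu hT).2 ⟨by omega, by omega⟩
  have htop : IsActive i T (top i T j) (j + 1) :=
    hfirst.of_le_of_le hlam hmu hT h' le_rfl hr.1 j.le_succ le_rfl
  have hbot : IsActive i T (bot i T (j + 1) - 1) j :=
    h.of_le_of_le hlam hmu hT hlast (by omega) le_rfl le_rfl j.le_succ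
  have := (isActive_iff hlam hmu hT).1 htop
  have := (isActive_iff hlam hmu hT).1 hbot
  omega

end Active

section Word

open Letter

variable {lam mu : ℕ → ℕ} {T : ℕ → ℕ → Finset ℕ} {i r j : ℕ}

/-- The cut of a column containing both `i` and `i + 1`, see `Letter`. -/
noncomputable def cut (i : ℕ) (T : ℕ → ℕ → Finset ℕ) (j : ℕ) : ℕ :=
  let r := sInf {r | i + 1 ∈ T r j}
  if i ∈ T r j then 2 * r + 1 else 2 * r

/-- The word recording where the entries `i` and `i + 1` are in each column of `T`. -/
noncomputable def word (i : ℕ) (T : ℕ → ℕ → Finset ℕ) (j : ℕ) : Letter :=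
  if ∃ r, i ∈ T r j then
    if ∃ r, i + 1 ∈ T r j then mix (cut i T j) else one
  else if ∃ r, i + 1 ∈ T r j then two else blank

theorem hasLow_word : (word i T j).HasLow ↔ ∃ r, i ∈ T r j := by
  simp only [word]
  split_ifs <;> simp_all [HasLow]

theorem hasLow_flip_word : (word i T j).flip.HasLow ↔ ∃ r, i + 1 ∈ T r j := by
  simp only [word]
  split_ifs <;> simp_all [HasLow, Letter.flip]

theorem mem_iff_cut (hlam : IsPartitionFun lam) (hmu : IsPartitionFun mu) (hT : IsSVRPP lam mu T)
    (hex : ∃ r, i + 1 ∈ T r j) (h : IsActive i T r j) :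
    (i ∈ T r j ↔ 2 * r < cut i T j) ∧ (i + 1 ∈ T r j ↔ cut i T j ≤ 2 * r + 1) := by
  have hfirst : i + 1 ∈ T (sInf {r | i + 1 ∈ T r j}) j := Nat.sInf_mem hex
  simp only [cut]
  set q := sInf {r | i + 1 ∈ T r j}
  rcases lt_trichotomy r q with hlt | rfl | hlt
  · have hright : i + 1 ∉ T r j := Nat.notMem_of_lt_sInf (s := {r | i + 1 ∈ T r j}) hlt
    have hleft : i ∈ T r j := h.mem_or_mem.resolve_right hright
    simp only [hright, hleft, true_iff, false_iff]
    split_ifs <;> omega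
  · simp only [hfirst, true_iff]
    split_ifs with hi <;> simp only [hi, true_iff, false_iff] <;> omega
  · have hleft : i ∉ T r j := fun hi => by
      simpa using hT.le_of_mem_col hlam hmu hlt hfirst hi
    have hright : i + 1 ∈ T r j := h.mem_or_mem.resolve_left hleft
    simp only [hright, hleft, true_iff, false_iff]
    split_ifs <;> omega

theorem left_mem_cell_word (hlam : IsPartitionFun lam) (hmu : IsPartitionFun mu)
    (hT : IsSVRPP lam mu T) (h : IsActive i T r j) :
    i ∈ (word i T j).cell i r ↔ i ∈ T r j := by
  simp only [word]
  split_ifs with hlow hhigh hhigh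
  · rw [left_mem_cell_mix, (mem_iff_cut hlam hmu hT hhigh h).1]
  · simpa [cell] using h.mem_or_mem.resolve_right fun hr => hhigh ⟨r, hr⟩
  · simpa [cell] using fun hr => hlow ⟨r, hr⟩
  · simpa [cell] using fun hr => hlow ⟨r, hr⟩

theorem right_mem_cell_word (hlam : IsPartitionFun lam) (hmu : IsPartitionFun mu)
    (hT : IsSVRPP lam mu T) (h : IsActive i T r j) :
    i + 1 ∈ (word i T j).cell i r ↔ i + 1 ∈ T r j := by
  simp only [word]
  split_ifs with hlow hhigh hhigh
  · rw [right_mem_cell_mix, (mem_iff_cut hlam hmu hT hhigh h).2]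
  · simpa [cell] using fun hr => hhigh ⟨r, hr⟩
  · simpa [cell] using h.mem_or_mem.resolve_left fun hr => hlow ⟨r, hr⟩
  · simpa [cell] using fun hr => hhigh ⟨r, hr⟩

theorem cell_word (hlam : IsPartitionFun lam) (hmu : IsPartitionFun mu)
    (hT : IsSVRPP lam mu T) (h : IsActive i T r j) :
    (word i T j).cell i r = T r j ∩ {i, i + 1} := by
  ext x
  have hleft := left_mem_cell_word hlam hmu hT h
  have hright := right_mem_cell_word hlam hmu hT h
  by_cases hx : x ∈ ({i, i + 1} : Finset ℕ)
  · simp only [Finset.mem_inter, hx, and_true]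
    simp only [Finset.mem_insert, Finset.mem_singleton] at hx
    rcases hx with rfl | rfl <;> assumption
  · simp only [Finset.mem_inter, hx, and_false, iff_false]
    exact fun h => hx (cell_subset _ _ h)

theorem fitsIn_word (hlam : IsPartitionFun lam) (hmu : IsPartitionFun mu) (hT : IsSVRPP lam mu T)
    (j : ℕ) : (word i T j).FitsIn (top i T j) (bot i T j) := by
  have hactive (r) : IsActive i T r j ↔ top i T j ≤ r ∧ r < bot i T j := isActive_iff hlam hmu hT
  simp only [word]
  split_ifs with hlow hhigh hhigh
  · obtain ⟨r, hr⟩ := hlow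
    obtain ⟨r', hr'⟩ := id hhigh
    have hcut := (mem_iff_cut hlam hmu hT hhigh (isActive_of_left_mem hr)).1.1 hr
    have hcut' := (mem_iff_cut hlam hmu hT hhigh (isActive_of_right_mem hr')).2.1 hr'
    have hrange := (hactive r).1 (isActive_of_left_mem hr)
    have hrange' := (hactive r').1 (isActive_of_right_mem hr')
    exact ⟨by omega, by omega⟩
  · obtain ⟨r, hr⟩ := hlow
    have hrange := (hactive r).1 (isActive_of_left_mem hr)
    exact hrange.1.trans_lt hrange.2
  · obtain ⟨r, hr⟩ := hhigh
    have hrange := (hactive r).1 (isActive_of_right_mem hr)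
    exact hrange.1.trans_lt hrange.2
  · refine not_lt.1 fun hlt => ?_
    rcases ((hactive _).2 ⟨le_rfl, hlt⟩).mem_or_mem with h | h
    exacts [hlow ⟨_, h⟩, hhigh ⟨_, h⟩]

theorem isAdmissible_word (hlam : IsPartitionFun lam) (hmu : IsPartitionFun mu)
    (hT : IsSVRPP lam mu T) : IsAdmissible (top i T) (bot i T) (word i T) where
  fitsIn := fitsIn_word hlam hmu hT
  cut_le j k s t hjk hj hk r hsr := by
    by_contra! hrt
    have hs := fitsIn_word (i := i) hlam hmu hT j
    have ht := fitsIn_word (i := i) hlam hmu hT k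
    simp only [hj, hk, FitsIn] at hs ht
    have hj_active : IsActive i T (s / 2) j := (isActive_iff hlam hmu hT).2 (by omega)
    have hk_active : IsActive i T ((t - 1) / 2) k := (isActive_iff hlam hmu hT).2 (by omega)
    have hright : i + 1 ∈ T (s / 2) j := by
      rw [← right_mem_cell_word hlam hmu hT hj_active, hj, right_mem_cell_mix]
      omega
    have hleft : i ∈ T ((t - 1) / 2) k := by
      rw [← left_mem_cell_word hlam hmu hT hk_active, hk, left_mem_cell_mix]
      omega
    have := hT.le_of_mem hlam hmu (by omega) hjk.le (.inr hjk) hright hleft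
    omega

theorem not_isDescent_word (hlam : IsPartitionFun lam) (hmu : IsPartitionFun mu)
    (hT : IsSVRPP lam mu T) :
    ¬ IsDescent (top i T) (bot i T) j (word i T j) (word i T (j + 1)) := by
  intro h
  obtain ⟨r, htop, hbot, hright, hleft⟩ := h.exists_row (i := i)
  rw [right_mem_cell_word hlam hmu hT
    ((isActive_iff hlam hmu hT).2 ⟨htop, hbot.trans_le h.2.1⟩)] at hright
  rw [left_mem_cell_word hlam hmu hT
    ((isActive_iff hlam hmu hT).2 ⟨h.1.trans htop, hbot⟩)] at hleft
  have := hT.le_of_mem_row j.lt_succ_self hright hleft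
  omega

end Word

section Recolor

open Letter

variable {lam mu : ℕ → ℕ} {T : ℕ → ℕ → Finset ℕ} {i r j : ℕ} {w w' : ℕ → Letter}

/-- The filling obtained from `T` by rewriting the entries `i` and `i + 1` in the active boxes as
prescribed by the word `w`. -/
noncomputable def recolor (i : ℕ) (T : ℕ → ℕ → Finset ℕ) (w : ℕ → Letter) (r j : ℕ) : Finset ℕ :=
  T r j \ {i, i + 1} ∪ if IsActive i T r j then (w j).cell i r else ∅

theorem mem_recolor {x : ℕ} : x ∈ recolor i T w r j ↔
    (x ∈ T r j ∧ x ∉ ({i, i + 1} : Finset ℕ)) ∨ (IsActive i T r j ∧ x ∈ (w j).cell i r) := by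
  simp only [recolor, Finset.mem_union, Finset.mem_sdiff]
  split_ifs with h <;> simp [h]

theorem recolor_sdiff : recolor i T w r j \ {i, i + 1} = T r j \ {i, i + 1} := by
  rw [recolor, Finset.union_sdiff_distrib, sdiff_idem, Finset.union_eq_left]
  split_ifs
  · simp [Finset.sdiff_eq_empty_iff_subset.2 (cell_subset _ _)]
  · simp

theorem recolor_inter : recolor i T w r j ∩ {i, i + 1} =
    if IsActive i T r j then (w j).cell i r else ∅ := by
  rw [recolor, Finset.union_inter_distrib_right, Finset.sdiff_inter_self, Finset.empty_union,
    Finset.inter_eq_left]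
  split_ifs
  · exact cell_subset _ _
  · exact Finset.empty_subset _

theorem recolor_of_not_isActive (h : ¬ IsActive i T r j) : recolor i T w r j = T r j := by
  rw [recolor, if_neg h, Finset.union_empty, Finset.sdiff_eq_self_iff_disjoint,
    Finset.disjoint_iff_inter_eq_empty]
  exact Finset.not_nonempty_iff_eq_empty.1 h

theorem recolor_word (hlam : IsPartitionFun lam) (hmu : IsPartitionFun mu)
    (hT : IsSVRPP lam mu T) : recolor i T (word i T) = T := by
  ext1 r
  ext1 j
  by_cases h : IsActive i T r j
  · rw [recolor, if_pos h, cell_word hlam hmu hT h, Finset.sdiff_union_inter]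
  · exact recolor_of_not_isActive h

theorem cell_nonempty_of_isActive (hlam : IsPartitionFun lam) (hmu : IsPartitionFun mu)
    (hT : IsSVRPP lam mu T) (hw : IsAdmissible (top i T) (bot i T) w) (h : IsActive i T r j) :
    ((w j).cell i r).Nonempty :=
  cell_nonempty ((hw.fitsIn j).ne_blank ((isActive_iff hlam hmu hT).1 h))

theorem isActive_recolor (hlam : IsPartitionFun lam) (hmu : IsPartitionFun mu)
    (hT : IsSVRPP lam mu T) (hw : IsAdmissible (top i T) (bot i T) w) :
    IsActive i (recolor i T w) = IsActive i T := by
  ext r j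
  rw [IsActive, recolor_inter]
  split_ifs with h
  · simp only [h, cell_nonempty_of_isActive hlam hmu hT hw h]
  · simp [h]

theorem top_recolor (hlam : IsPartitionFun lam) (hmu : IsPartitionFun mu)
    (hT : IsSVRPP lam mu T) (hw : IsAdmissible (top i T) (bot i T) w) :
    top i (recolor i T w) = top i T := by
  ext j
  simp only [top, isActive_recolor hlam hmu hT hw]

theorem bot_recolor (hlam : IsPartitionFun lam) (hmu : IsPartitionFun mu)
    (hT : IsSVRPP lam mu T) (hw : IsAdmissible (top i T) (bot i T) w) :
    bot i (recolor i T w) = bot i T := by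
  ext j
  simp only [bot, isActive_recolor hlam hmu hT hw]

theorem recolor_recolor (hlam : IsPartitionFun lam) (hmu : IsPartitionFun mu)
    (hT : IsSVRPP lam mu T) (hw : IsAdmissible (top i T) (bot i T) w) :
    recolor i (recolor i T w) w' = recolor i T w' := by
  ext1 r
  ext1 j
  rw [recolor, recolor_sdiff, isActive_recolor hlam hmu hT hw, recolor]

theorem finsetLE_recolor {r' j' : ℕ} (hle : FinsetLE (T r j) (T r' j'))
    (hcell : IsActive i T r j → IsActive i T r' j' →
      i + 1 ∈ (w j).cell i r → i ∉ (w j').cell i r') :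
    FinsetLE (recolor i T w r j) (recolor i T w r' j') := by
  have hpair {l : Letter} {r x : ℕ} (hx : x ∈ l.cell i r) : x = i ∨ x = i + 1 := by
    simpa using cell_subset l r hx
  intro x hx y hy
  rcases mem_recolor.1 hx with ⟨hxT, hxi⟩ | ⟨hx_active, hx_cell⟩ <;>
    rcases mem_recolor.1 hy with ⟨hyT, hyi⟩ | ⟨hy_active, hy_cell⟩
  · exact hle x hxT y hyT
  · obtain ⟨z, hz, -, hzi⟩ := isActive_iff_exists.1 hy_active
    have hxz := hle x hxT z hz
    have hy_pair := hpair hy_cell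
    simp only [Finset.mem_insert, Finset.mem_singleton] at hxi
    omega
  · obtain ⟨z, hz, hzi, -⟩ := isActive_iff_exists.1 hx_active
    have hzy := hle z hz y hyT
    have hx_pair := hpair hx_cell
    simp only [Finset.mem_insert, Finset.mem_singleton] at hyi
    omega
  · rcases hpair hx_cell with rfl | rfl <;> rcases hpair hy_cell with rfl | rfl
    · exact le_rfl
    · exact Nat.le_succ _
    · exact absurd hy_cell (hcell hx_active hy_active hx_cell)
    · exact le_rfl

theorem isSVRPP_recolor (hlam : IsPartitionFun lam) (hmu : IsPartitionFun mu)
    (hT : IsSVRPP lam mu T) (hi : 1 ≤ i) (hw : IsAdmissible (top i T) (bot i T) w)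
    (hsorted : ∀ j, ¬ IsDescent (top i T) (bot i T) j (w j) (w (j + 1))) :
    IsSVRPP lam mu (recolor i T w) := by
  refine ⟨fun r j h => ?_, fun r j h => ?_, fun r j x hx => ?_, fun r j h h' => ?_,
    fun r j h h' => ?_⟩
  · rw [recolor_of_not_isActive fun hact => h (hact.inShape hT), hT.1 r j h]
  · by_cases hact : IsActive i T r j
    · rw [recolor, if_pos hact]
      exact (cell_nonempty_of_isActive hlam hmu hT hw hact).inr
    · rw [recolor_of_not_isActive hact]
      exact hT.2.1 r j h
  · by_cases hpair : x ∈ ({i, i + 1} : Finset ℕ)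
    · simp only [Finset.mem_insert, Finset.mem_singleton] at hpair
      omega
    · exact hT.2.2.1 r j x
        ((mem_recolor.1 hx).resolve_right fun h => hpair (cell_subset _ _ h.2)).1
  · refine finsetLE_recolor (hT.2.2.2.1 r j h h') fun hact hact' hright hleft => hsorted j ?_
    have hrange := (isActive_iff hlam hmu hT).1 hact
    have hrange' := (isActive_iff hlam hmu hT).1 hact'
    have hanti := top_le_top_and_bot_le_bot hlam hmu hT hact hact'
    exact ⟨hanti.1, hanti.2, .of_mem_cell (hw.fitsIn j) (hw.fitsIn (j + 1))
      (fun s t hs ht => hw.cut_le j.lt_succ_self hs ht r) hrange.1 hrange'.2 hright hleft⟩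
  · exact finsetLE_recolor (hT.2.2.2.2 r j h h') fun _ _ =>
      left_notMem_cell_of_right_mem r.lt_succ_self

theorem word_recolor (hlam : IsPartitionFun lam) (hmu : IsPartitionFun mu)
    (hT : IsSVRPP lam mu T) (hw : IsAdmissible (top i T) (bot i T) w)
    (hT' : IsSVRPP lam mu (recolor i T w)) : word i (recolor i T w) = w := by
  have hactive := isActive_recolor hlam hmu hT hw
  have hfits := fitsIn_word (i := i) hlam hmu hT'
  rw [top_recolor hlam hmu hT hw, bot_recolor hlam hmu hT hw] at hfits
  ext1 j
  refine (hfits j).eq_of_cell_eq (i := i) (hw.fitsIn j) fun r htop hbot => ?_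
  have h : IsActive i T r j := (isActive_iff hlam hmu hT).2 ⟨htop, hbot⟩
  rw [cell_word hlam hmu hT' (by rwa [hactive]), recolor_inter, if_pos h]

end Recolor

section Statistics

open Letter

variable {lam mu : ℕ → ℕ} {T : ℕ → ℕ → Finset ℕ} {i : ℕ} {w : ℕ → Letter}

theorem ircont_left (i : ℕ) (T : ℕ → ℕ → Finset ℕ) :
    ircont T i = {j | (word i T j).HasLow}.ncard := by
  simp only [ircont, hasLow_word]

theorem ircont_right (i : ℕ) (T : ℕ → ℕ → Finset ℕ) :
    ircont T (i + 1) = {j | (word i T j).flip.HasLow}.ncard := by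
  simp only [ircont, hasLow_flip_word]

theorem ircont_recolor_of_ne {v : ℕ} (hv : v ≠ i) (hv' : v ≠ i + 1) :
    ircont (recolor i T w) v = ircont T v := by
  have hnotMem : v ∉ ({i, i + 1} : Finset ℕ) := by simp [hv, hv']
  have hmem (r j) : v ∈ recolor i T w r j ↔ v ∈ T r j := by
    simpa [mem_recolor, hnotMem] using fun _ h => absurd (cell_subset _ _ h) hnotMem
  simp only [ircont, hmem]

theorem ceq_eq_ncard_not_disjoint (hT : IsSVRPP lam mu T) (r : ℕ) :
    ceq lam mu T r = {j | ¬ Disjoint (T r j) (T (r + 1) j)}.ncard := by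
  rw [ceq]
  congr 1
  ext j
  simp only [Set.mem_ofPred_eq, Finset.not_disjoint_iff]
  constructor
  · rintro ⟨-, -, m, hm, -, hm', -⟩
    exact ⟨m, hm, hm'⟩
  · rintro ⟨m, hm, hm'⟩
    have h := hT.inShape_of_mem hm
    have h' := hT.inShape_of_mem hm'
    have hle := hT.2.2.2.2 r j h h'
    exact ⟨h, h', m, hm, fun x hx => hle x hx m hm', hm', fun x hx => hle m hm x hx⟩

/-- The columns in which rows `r` and `r + 1` have a common entry, if one ignores the difference
between `i` and `i + 1`. -/
def mergedCeqSet (i : ℕ) (T : ℕ → ℕ → Finset ℕ) (r : ℕ) : Set ℕ :=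
  {j | (IsActive i T r j ∧ IsActive i T (r + 1) j) ∨
    ¬ Disjoint (T r j \ {i, i + 1}) (T (r + 1) j \ {i, i + 1})}

theorem mergedCeqSet_recolor (hlam : IsPartitionFun lam) (hmu : IsPartitionFun mu)
    (hT : IsSVRPP lam mu T) (hw : IsAdmissible (top i T) (bot i T) w) (r : ℕ) :
    mergedCeqSet i (recolor i T w) r = mergedCeqSet i T r := by
  simp only [mergedCeqSet, isActive_recolor hlam hmu hT hw, recolor_sdiff]

theorem finite_mergedCeqSet (hT : IsSVRPP lam mu T) (r : ℕ) : (mergedCeqSet i T r).Finite := by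
  refine (Set.finite_Iio (lam r)).subset ?_
  rintro j (⟨h, -⟩ | h)
  · exact (h.inShape hT).2
  · obtain ⟨x, hx, -⟩ := Finset.not_disjoint_iff.1 h
    exact (hT.inShape_of_mem (Finset.mem_sdiff.1 hx).1).2

theorem isActive_of_word_eq_mix (hlam : IsPartitionFun lam) (hmu : IsPartitionFun mu)
    (hT : IsSVRPP lam mu T) {j r s : ℕ} (h : word i T j = mix s) (hr : s ≤ 2 * r + 2)
    (hr' : 2 * r ≤ s) : IsActive i T r j := by
  have hfits := fitsIn_word (i := i) hlam hmu hT j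
  simp only [h, FitsIn] at hfits
  exact (isActive_iff hlam hmu hT).2 (by omega)

theorem disjoint_of_word_eq_mix (hlam : IsPartitionFun lam) (hmu : IsPartitionFun mu)
    (hT : IsSVRPP lam mu T) {j r : ℕ} (h : word i T j = mix (2 * r + 2)) :
    Disjoint (T r j) (T (r + 1) j) := by
  have hactive : IsActive i T r j :=
    isActive_of_word_eq_mix hlam hmu hT h (by omega) (by omega)
  have hactive' : IsActive i T (r + 1) j :=
    isActive_of_word_eq_mix hlam hmu hT h (by omega) (by omega)
  have hright : i + 1 ∉ T r j := by
    rw [← right_mem_cell_word hlam hmu hT hactive, h, right_mem_cell_mix]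
    omega
  have hleft : i ∉ T (r + 1) j := by
    rw [← left_mem_cell_word hlam hmu hT hactive', h, left_mem_cell_mix]
    omega
  refine Finset.disjoint_left.2 fun x hx hx' => ?_
  have hix : i ≤ x :=
    hT.le_of_mem_col hlam hmu r.lt_succ_self (hactive.mem_or_mem.resolve_right hright) hx'
  have hxi : x ≤ i + 1 :=
    hT.le_of_mem_col hlam hmu r.lt_succ_self hx (hactive'.mem_or_mem.resolve_left hleft)
  obtain rfl | rfl : x = i ∨ x = i + 1 := by omega
  exacts [hleft hx', hright hx]

theorem not_disjoint_iff_mem_mergedCeqSet (hlam : IsPartitionFun lam) (hmu : IsPartitionFun mu)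
    (hT : IsSVRPP lam mu T) {j r : ℕ} :
    ¬ Disjoint (T r j) (T (r + 1) j) ↔
      j ∈ mergedCeqSet i T r ∧ word i T j ≠ mix (2 * r + 2) := by
  constructor
  · refine fun h => ⟨?_, fun hmix => h (disjoint_of_word_eq_mix hlam hmu hT hmix)⟩
    obtain ⟨x, hx, hx'⟩ := Finset.not_disjoint_iff.1 h
    by_cases hpair : x ∈ ({i, i + 1} : Finset ℕ)
    · exact .inl ⟨⟨x, Finset.mem_inter.2 ⟨hx, hpair⟩⟩, ⟨x, Finset.mem_inter.2 ⟨hx', hpair⟩⟩⟩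
    · exact .inr (Finset.not_disjoint_iff.2
        ⟨x, Finset.mem_sdiff.2 ⟨hx, hpair⟩, Finset.mem_sdiff.2 ⟨hx', hpair⟩⟩)
  · rintro ⟨⟨hactive, hactive'⟩ | h, hmix⟩ hdisj
    · have hne : word i T j ≠ blank :=
        (fitsIn_word hlam hmu hT j).ne_blank ((isActive_iff hlam hmu hT).1 hactive)
      refine hmix ((disjoint_cell_cell_succ_iff (i := i) hne).1 ?_)
      rw [cell_word hlam hmu hT hactive, cell_word hlam hmu hT hactive']
      exact hdisj.mono Finset.inter_subset_left Finset.inter_subset_left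
    · exact h (hdisj.mono Finset.sdiff_subset Finset.sdiff_subset)

theorem ceq_add_ncard_mix (hlam : IsPartitionFun lam) (hmu : IsPartitionFun mu)
    (hT : IsSVRPP lam mu T) (r : ℕ) :
    ceq lam mu T r + {j | word i T j = mix (2 * r + 2)}.ncard = (mergedCeqSet i T r).ncard := by
  have hsubset : {j | word i T j = mix (2 * r + 2)} ⊆ mergedCeqSet i T r := fun j hj =>
    .inl ⟨isActive_of_word_eq_mix hlam hmu hT hj (by omega) (by omega),
      isActive_of_word_eq_mix hlam hmu hT hj (by omega) (by omega)⟩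
  have hdiff : {j | ¬ Disjoint (T r j) (T (r + 1) j)} =
      mergedCeqSet i T r \ {j | word i T j = mix (2 * r + 2)} :=
    Set.ext fun _ => not_disjoint_iff_mem_mergedCeqSet hlam hmu hT
  rw [ceq_eq_ncard_not_disjoint hT, hdiff,
    Set.ncard_sdiff_add_ncard_of_subset hsubset (finite_mergedCeqSet hT r)]

theorem card_sub_one_eq (hlam : IsPartitionFun lam) (hmu : IsPartitionFun mu)
    (hT : IsSVRPP lam mu T) (r j : ℕ) :
    (T r j).card - 1 = ((T r j \ {i, i + 1}).card + (if IsActive i T r j then 1 else 0) - 1) +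
      if word i T j = mix (2 * r + 1) then 1 else 0 := by
  rw [← Finset.card_sdiff_add_card_inter (T r j) {i, i + 1}]
  by_cases h : IsActive i T r j
  · have hne : word i T j ≠ blank :=
      (fitsIn_word hlam hmu hT j).ne_blank ((isActive_iff hlam hmu hT).1 h)
    rw [← cell_word hlam hmu hT h, card_cell hne, if_pos h]
    omega
  · have hne : word i T j ≠ mix (2 * r + 1) := fun hmix =>
      h (isActive_of_word_eq_mix hlam hmu hT hmix (by omega) (by omega))
    rw [Finset.not_nonempty_iff_eq_empty.1 h, if_neg h, if_neg hne, Finset.card_empty, add_zero,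
      add_zero]

theorem exv_eq_sum_add_ncard (hlam : IsPartitionFun lam) (hmu : IsPartitionFun mu)
    (hT : IsSVRPP lam mu T) (r : ℕ) :
    exv lam mu T r = ∑ j ∈ Finset.Ico (mu r) (lam r),
        ((T r j \ {i, i + 1}).card + (if IsActive i T r j then 1 else 0) - 1) +
      {j | word i T j = mix (2 * r + 1)}.ncard := by
  have hmix : {j | word i T j = mix (2 * r + 1)} =
      ((Finset.Ico (mu r) (lam r)).filter fun j => word i T j = mix (2 * r + 1) : Finset ℕ) := by
    ext j
    simp only [Set.mem_ofPred_eq, Finset.coe_filter, Finset.mem_Ico, iff_and_self]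
    intro hj
    exact (isActive_of_word_eq_mix hlam hmu hT hj (by omega) (by omega)).inShape hT
  rw [exv, Finset.sum_congr rfl fun j _ => card_sub_one_eq (i := i) hlam hmu hT r j,
    Finset.sum_add_distrib, hmix, Set.ncard_coe_finset, Finset.card_filter]

end Statistics

section Involution

open Letter

variable {lam mu : ℕ → ℕ} {T : ℕ → ℕ → Finset ℕ} {i : ℕ}

/-- The word of the image of `T` under the Bender–Knuth involution: the letters of the word of `T`
are flipped, and then sorted by removing descents as long as there are any. -/
noncomputable def sortedFlip (i : ℕ) (T : ℕ → ℕ → Finset ℕ) : ℕ → Letter :=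
  normalForm (SwapStep (IsDescent (top i T) (bot i T))) (Letter.flip ∘ word i T)

/-- The Bender–Knuth involution exchanging the roles of `i` and `i + 1` in a set-valued reverse
plane partition. -/
noncomputable def benderKnuth (i : ℕ) (T : ℕ → ℕ → Finset ℕ) : ℕ → ℕ → Finset ℕ :=
  recolor i T (sortedFlip i T)

theorem wellFounded_flip_swapStep_isDescent (hlam : IsPartitionFun lam) (hmu : IsPartitionFun mu)
    (hT : IsSVRPP lam mu T) :
    WellFounded (flip (SwapStep (IsDescent (top i T) (bot i T)))) := by
  refine wellFounded_flip_swapStep (n := lam 0) weight (fun j x y h => h.weight_lt)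
    fun j x y ⟨_, hbot, hxy⟩ => ?_
  have hactive : IsActive i T (top i T j) j :=
    (isActive_iff hlam hmu hT).2 ⟨le_rfl, hxy.lt.trans_le hbot⟩
  exact (hactive.inShape hT).2.trans_le (hlam.antitone (Nat.zero_le _))

theorem isNormalForm_sortedFlip (hlam : IsPartitionFun lam) (hmu : IsPartitionFun mu)
    (hT : IsSVRPP lam mu T) :
    IsNormalForm (SwapStep (IsDescent (top i T) (bot i T))) (Letter.flip ∘ word i T)
      (sortedFlip i T) :=
  isNormalForm_normalForm (wellFounded_flip_swapStep_isDescent hlam hmu hT) _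

theorem isAdmissible_sortedFlip (hlam : IsPartitionFun lam) (hmu : IsPartitionFun mu)
    (hT : IsSVRPP lam mu T) : IsAdmissible (top i T) (bot i T) (sortedFlip i T) :=
  (isAdmissible_word hlam hmu hT).flip.reflTransGen (isNormalForm_sortedFlip hlam hmu hT).1

theorem isSVRPP_benderKnuth (hlam : IsPartitionFun lam) (hmu : IsPartitionFun mu)
    (hT : IsSVRPP lam mu T) (hi : 1 ≤ i) : IsSVRPP lam mu (benderKnuth i T) :=
  isSVRPP_recolor hlam hmu hT hi (isAdmissible_sortedFlip hlam hmu hT)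
    fun j hj => (isNormalForm_sortedFlip hlam hmu hT).2 _ ⟨j, hj, rfl⟩

theorem word_benderKnuth (hlam : IsPartitionFun lam) (hmu : IsPartitionFun mu)
    (hT : IsSVRPP lam mu T) (hi : 1 ≤ i) : word i (benderKnuth i T) = sortedFlip i T :=
  word_recolor hlam hmu hT (isAdmissible_sortedFlip hlam hmu hT)
    (isSVRPP_benderKnuth hlam hmu hT hi)

theorem sortedFlip_benderKnuth (hlam : IsPartitionFun lam) (hmu : IsPartitionFun mu)
    (hT : IsSVRPP lam mu T) (hi : 1 ≤ i) : sortedFlip i (benderKnuth i T) = word i T := by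
  have hw := isAdmissible_sortedFlip (i := i) hlam hmu hT
  have hnormal := isNormalForm_sortedFlip (i := i) hlam hmu (isSVRPP_benderKnuth hlam hmu hT hi)
  rw [word_benderKnuth hlam hmu hT hi, benderKnuth, top_recolor hlam hmu hT hw,
    bot_recolor hlam hmu hT hw] at hnormal
  exact hnormal.unique (wellFounded_flip_swapStep_isDescent hlam hmu hT)
    (fun _ _ _ => join_of_swapStep braidClosed_isDescent)
    ((isNormalForm_sortedFlip hlam hmu hT).reverse (fun _ _ _ => IsDescent.flip) flip_involutive
      fun _ ⟨_, hj, _⟩ => not_isDescent_word hlam hmu hT hj)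

theorem benderKnuth_benderKnuth (hlam : IsPartitionFun lam) (hmu : IsPartitionFun mu)
    (hT : IsSVRPP lam mu T) (hi : 1 ≤ i) : benderKnuth i (benderKnuth i T) = T :=
  calc benderKnuth i (benderKnuth i T)
      = recolor i (benderKnuth i T) (word i T) := by
        rw [benderKnuth, sortedFlip_benderKnuth hlam hmu hT hi]
    _ = recolor i T (word i T) := recolor_recolor hlam hmu hT (isAdmissible_sortedFlip hlam hmu hT)
    _ = T := recolor_word hlam hmu hT

theorem ncard_word_benderKnuth (hlam : IsPartitionFun lam) (hmu : IsPartitionFun mu)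
    (hT : IsSVRPP lam mu T) (hi : 1 ≤ i) (p : Letter → Prop) :
    {j | p (word i (benderKnuth i T) j)}.ncard = {j | p (word i T j).flip}.ncard := by
  rw [word_benderKnuth hlam hmu hT hi]
  exact ncard_eq_of_reflTransGen_swapStep (isNormalForm_sortedFlip hlam hmu hT).1 p

theorem ncard_word_benderKnuth_eq_mix (hlam : IsPartitionFun lam) (hmu : IsPartitionFun mu)
    (hT : IsSVRPP lam mu T) (hi : 1 ≤ i) (s : ℕ) :
    {j | word i (benderKnuth i T) j = mix s}.ncard = {j | word i T j = mix s}.ncard := by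
  simpa only [flip_eq_mix_iff] using ncard_word_benderKnuth hlam hmu hT hi (· = mix s)

theorem ceq_benderKnuth (hlam : IsPartitionFun lam) (hmu : IsPartitionFun mu)
    (hT : IsSVRPP lam mu T) (hi : 1 ≤ i) (r : ℕ) :
    ceq lam mu (benderKnuth i T) r = ceq lam mu T r := by
  have h := ceq_add_ncard_mix (i := i) hlam hmu (isSVRPP_benderKnuth hlam hmu hT hi) r
  rw [ncard_word_benderKnuth_eq_mix hlam hmu hT hi, benderKnuth,
    mergedCeqSet_recolor hlam hmu hT (isAdmissible_sortedFlip hlam hmu hT),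
    ← ceq_add_ncard_mix hlam hmu hT] at h
  exact Nat.add_right_cancel h

theorem exv_benderKnuth (hlam : IsPartitionFun lam) (hmu : IsPartitionFun mu)
    (hT : IsSVRPP lam mu T) (hi : 1 ≤ i) (r : ℕ) :
    exv lam mu (benderKnuth i T) r = exv lam mu T r := by
  rw [exv_eq_sum_add_ncard (i := i) hlam hmu (isSVRPP_benderKnuth hlam hmu hT hi),
    exv_eq_sum_add_ncard (i := i) hlam hmu hT, ncard_word_benderKnuth_eq_mix hlam hmu hT hi,
    benderKnuth]
  simp only [recolor_sdiff, isActive_recolor hlam hmu hT (isAdmissible_sortedFlip hlam hmu hT)]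

theorem ircont_benderKnuth (hlam : IsPartitionFun lam) (hmu : IsPartitionFun mu)
    (hT : IsSVRPP lam mu T) (hi : 1 ≤ i) (v : ℕ) :
    ircont (benderKnuth i T) v = ircont T (Equiv.swap i (i + 1) v) := by
  rcases eq_or_ne v i with rfl | hv
  · rw [Equiv.swap_apply_left, ircont_left, ircont_right,
      ncard_word_benderKnuth hlam hmu hT hi HasLow]
  rcases eq_or_ne v (i + 1) with rfl | hv'
  · rw [Equiv.swap_apply_right, ircont_left i, ircont_right,
      ncard_word_benderKnuth hlam hmu hT hi fun l => l.flip.HasLow]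
    simp only [flip_involutive _]
  · rw [Equiv.swap_apply_of_ne_of_ne hv hv', benderKnuth, ircont_recolor_of_ne hv hv']

end Involution

end BenderKnuth

/-- For any skew shape `lam/mu` and any positive integer `i`, there exists
an involution `Φ` on `SVRPP(lam/mu)` preserving the `ceq` and `ex` statistics and exchanging
the `i`-th and `(i+1)`-th entries of the `ircont` statistic. -/
theorem exists_bender_knuth_involution (lam mu : ℕ → ℕ)
    (hlam : IsPartitionFun lam) (hmu : IsPartitionFun mu)
    (hsub : ∀ r, mu r ≤ lam r) (i : ℕ) (hi : 1 ≤ i) :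
    ∃ Φ : {T : ℕ → ℕ → Finset ℕ // IsSVRPP lam mu T} →
          {T : ℕ → ℕ → Finset ℕ // IsSVRPP lam mu T},
      Function.Involutive Φ ∧
      ∀ T, (∀ r, ceq lam mu (Φ T).1 r = ceq lam mu T.1 r) ∧
           (∀ r, exv lam mu (Φ T).1 r = exv lam mu T.1 r) ∧
           (∀ v, ircont (Φ T).1 v = ircont T.1 (Equiv.swap i (i + 1) v)) :=
  ⟨fun T => ⟨BenderKnuth.benderKnuth i T.1,
      BenderKnuth.isSVRPP_benderKnuth hlam hmu T.2 hi⟩,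
    fun T => Subtype.ext (BenderKnuth.benderKnuth_benderKnuth hlam hmu T.2 hi),
    fun T => ⟨BenderKnuth.ceq_benderKnuth hlam hmu T.2 hi,
      BenderKnuth.exv_benderKnuth hlam hmu T.2 hi,
      BenderKnuth.ircont_benderKnuth hlam hmu T.2 hi⟩⟩
end

section
/- For any skew shape λ/μ, there exists an involution Φ on SVRPP^{12}(λ/μ) (the set of SVRPPs of shape λ/μ whose entries are nonempty subsets of {1,2}) such that for every T: ceq(Φ(T)) = ceq(T), ex(Φ(T)) = ex(T), and ircont(Φ(T)) is obtained from ircont(T) by exchanging its first two entries. -/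
open scoped Classical

/-!
Read a filling as a word whose letters are its columns: all `1`, all `2`, or mixed with seam `s`.
As long as the mixed columns alone violate no row condition, rows can fail to increase weakly only
where two adjacent columns form one of the patterns `21`, `2M` or `M1`. Swapping the two columns
resolves such a descent, and this rewriting system terminates and is locally confluent (the only
critical overlap is `2M1`). Exchanging the letters `1` and `2` reverses every rewriting step, so
exchanging them and then rewriting to normal form is an involution. It only permutes the columns,
apart from the exchange, which keeps the mixed ones. Now `ceq` and `ex` depend only on the number of
mixed columns with each seam, while `ircont` counts columns by the values they contain.
-/

section Rewriting

variable {α : Type*} {r : α → α → Prop}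

/-- `a` is a normal form of the rewriting relation `r` if no step of `r` starts at `a`. -/
def IsNormalForm (r : α → α → Prop) (a : α) : Prop :=
  ∀ b, ¬ r a b

theorem IsNormalForm.eq_of_reflTransGen {a b : α} (ha : IsNormalForm r a)
    (hab : Relation.ReflTransGen r a b) : a = b := by
  rcases hab.cases_head with rfl | ⟨c, hac, -⟩
  · rfl
  · exact absurd hac (ha c)

theorem exists_isNormalForm_reflTransGen (hwf : WellFounded (Function.swap r)) (a : α) :
    ∃ b, Relation.ReflTransGen r a b ∧ IsNormalForm r b := by
  obtain ⟨b, hab, hb⟩ := hwf.has_min {b | Relation.ReflTransGen r a b} ⟨a, .refl⟩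
  exact ⟨b, hab, fun c hbc => hb c (hab.tail hbc) hbc⟩

/-- Newman's lemma. -/
theorem join_reflTransGen_of_locallyConfluent (hwf : WellFounded (Function.swap r))
    (hloc : ∀ a b c, r a b → r a c → Relation.Join (Relation.ReflTransGen r) b c) {a b c : α}
    (hab : Relation.ReflTransGen r a b) (hac : Relation.ReflTransGen r a c) :
    Relation.Join (Relation.ReflTransGen r) b c := by
  induction a using hwf.induction generalizing b c with
  | _ a ih =>
    rcases hab.cases_head with rfl | ⟨b', hab', hb'b⟩
    · exact ⟨c, hac, .refl⟩
    rcases hac.cases_head with rfl | ⟨c', hac', hc'c⟩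
    · exact ⟨b, .refl, hab⟩
    obtain ⟨d, hb'd, hc'd⟩ := hloc a b' c' hab' hac'
    obtain ⟨e, hbe, hde⟩ := ih b' hab' hb'b hb'd
    obtain ⟨f, hef, hcf⟩ := ih c' hac' (hc'd.trans hde) hc'c
    exact ⟨f, hbe.trans hef, hcf⟩

theorem IsNormalForm.eq_of_locallyConfluent (hwf : WellFounded (Function.swap r))
    (hloc : ∀ a b c, r a b → r a c → Relation.Join (Relation.ReflTransGen r) b c) {a b c : α}
    (hb : IsNormalForm r b) (hc : IsNormalForm r c)
    (hab : Relation.ReflTransGen r a b) (hac : Relation.ReflTransGen r a c) : b = c := by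
  obtain ⟨d, hbd, hcd⟩ := join_reflTransGen_of_locallyConfluent hwf hloc hab hac
  exact (hb.eq_of_reflTransGen hbd).trans (hc.eq_of_reflTransGen hcd).symm

theorem exists_involutive_of_reversing (hwf : WellFounded (Function.swap r))
    (hloc : ∀ a b c, r a b → r a c → Relation.Join (Relation.ReflTransGen r) b c)
    {ι : α → α} (hι : Function.Involutive ι) (hrev : ∀ a b, r a b → r (ι b) (ι a))
    {P : α → Prop} (hPι : ∀ a, P a → P (ι a)) (hPr : ∀ a b, P a → r a b → P b) :
    ∃ Φ : {a // P a ∧ IsNormalForm r a} → {a // P a ∧ IsNormalForm r a},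
      Function.Involutive Φ ∧ ∀ a, Relation.ReflTransGen r (ι a.1) (Φ a).1 := by
  have hP : ∀ a b, P a → Relation.ReflTransGen r a b → P b := fun a b ha hab => by
    induction hab with
    | refl => exact ha
    | tail _ hbc ihb => exact hPr _ _ ihb hbc
  have hrev' : ∀ a b, Relation.ReflTransGen r a b → Relation.ReflTransGen r (ι b) (ι a) :=
    fun a b hab => (hab.lift (p := Function.swap r) ι hrev).swap
  have hΦ : ∀ a : {a // P a ∧ IsNormalForm r a},
      ∃ b : {a // P a ∧ IsNormalForm r a}, Relation.ReflTransGen r (ι a.1) b.1 := fun a => by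
    obtain ⟨b, hab, hb⟩ := exists_isNormalForm_reflTransGen hwf (ι a.1)
    exact ⟨⟨b, hP _ _ (hPι _ a.2.1) hab, hb⟩, hab⟩
  choose Φ hΦ using hΦ
  refine ⟨Φ, fun a => Subtype.ext ?_, hΦ⟩
  have hback : Relation.ReflTransGen r (ι (Φ a).1) a.1 := by
    simpa only [hι a.1] using hrev' _ _ (hΦ a)
  exact IsNormalForm.eq_of_locallyConfluent hwf hloc (Φ (Φ a)).2.2 a.2.2 (hΦ (Φ a)) hback

end Rewriting

theorem sum_range_mul_comp_swap_lt {n j : ℕ} {w : ℕ → ℕ} (hj : j + 1 < n)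
    (hw : w j < w (j + 1)) :
    ∑ i ∈ Finset.range n, i * w (Equiv.swap j (j + 1) i) < ∑ i ∈ Finset.range n, i * w i := by
  obtain ⟨m, rfl⟩ := Nat.exists_eq_add_of_le (show j + 1 + 1 ≤ n by omega)
  have hlow : ∑ i ∈ Finset.range j, i * w (Equiv.swap j (j + 1) i)
      = ∑ i ∈ Finset.range j, i * w i := Finset.sum_congr rfl fun i hi => by
    have := Finset.mem_range.1 hi
    rw [Equiv.swap_apply_of_ne_of_ne (by omega) (by omega)]
  have hhigh : ∑ i ∈ Finset.range m, (j + 1 + 1 + i) * w (Equiv.swap j (j + 1) (j + 1 + 1 + i))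
      = ∑ i ∈ Finset.range m, (j + 1 + 1 + i) * w (j + 1 + 1 + i) :=
    Finset.sum_congr rfl fun i _ => by
      rw [Equiv.swap_apply_of_ne_of_ne (by omega) (by omega)]
  simp only [Finset.sum_range_add, Finset.sum_range_succ, hlow, hhigh,
    Equiv.swap_apply_left, Equiv.swap_apply_right]
  linarith

theorem ncard_setOf_apply_perm {α : Type*} (σ : Equiv.Perm α) (p : α → Prop) :
    {a | p (σ a)}.ncard = {a | p a}.ncard :=
  Set.ncard_preimage_of_injective_subset_range (s := {a | p a}) σ.injective
    (by simp only [σ.surjective.range_eq, Set.subset_univ])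

section FinsetLE

variable {A B : Finset ℕ}

theorem finsetLE_of_lt {g : ℕ → Finset ℕ} {a b : ℕ} (hab : a < b)
    (hne : ∀ k, a < k → k < b → (g k).Nonempty)
    (hstep : ∀ k, a ≤ k → k < b → FinsetLE (g k) (g (k + 1))) : FinsetLE (g a) (g b) := by
  induction b, hab using Nat.le_induction with
  | base => exact hstep a le_rfl a.lt_succ_self
  | succ b hab ih =>
    obtain ⟨z, hz⟩ := hne b hab b.lt_succ_self
    have hgab := ih (fun k hak hkb => hne k hak (by omega)) fun k hak hkb => hstep k hak (by omega)
    exact fun x hx y hy => (hgab x hx z hz).trans (hstep b (by omega) b.lt_succ_self z hz y hy)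

theorem exists_max_eq_min_iff_inter_nonempty (hAB : FinsetLE A B) :
    (∃ m, m ∈ A ∧ (∀ x ∈ A, x ≤ m) ∧ m ∈ B ∧ ∀ x ∈ B, m ≤ x) ↔ (A ∩ B).Nonempty := by
  constructor
  · rintro ⟨m, hmA, -, hmB, -⟩
    exact ⟨m, Finset.mem_inter.2 ⟨hmA, hmB⟩⟩
  · rintro ⟨m, hm⟩
    obtain ⟨hmA, hmB⟩ := Finset.mem_inter.1 hm
    exact ⟨m, hmA, fun x hx => hAB x hx m hmB, hmB, fun x hx => hAB m hmA x hx⟩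

theorem eq_one_or_eq_two_of_mem (hA : A ⊆ Finset.Icc 1 2) {x : ℕ} (hx : x ∈ A) :
    x = 1 ∨ x = 2 := by
  have := Finset.mem_Icc.1 (hA hx)
  omega

theorem finsetLE_iff_of_subset_Icc (hA : A ⊆ Finset.Icc 1 2) (hB : B ⊆ Finset.Icc 1 2) :
    FinsetLE A B ↔ ¬ (2 ∈ A ∧ 1 ∈ B) := by
  refine ⟨fun h h21 => absurd (h 2 h21.1 1 h21.2) (by omega), fun h a ha b hb => ?_⟩
  rcases eq_one_or_eq_two_of_mem hA ha with rfl | rfl <;>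
    rcases eq_one_or_eq_two_of_mem hB hb with rfl | rfl
  · exact le_rfl
  · exact one_le_two
  · exact absurd ⟨ha, hb⟩ h
  · exact le_rfl

theorem finset_eq_of_subset_Icc (hA : A ⊆ Finset.Icc 1 2) (hB : B ⊆ Finset.Icc 1 2)
    (h1 : 1 ∈ A ↔ 1 ∈ B) (h2 : 2 ∈ A ↔ 2 ∈ B) : A = B := by
  ext x
  constructor <;> intro hx
  · rcases eq_one_or_eq_two_of_mem hA hx with rfl | rfl
    exacts [h1.1 hx, h2.1 hx]
  · rcases eq_one_or_eq_two_of_mem hB hx with rfl | rfl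
    exacts [h1.2 hx, h2.2 hx]

end FinsetLE

/-- The possible columns of a filling by nonempty subsets of `{1, 2}` that increases down columns:
no boxes at all, all boxes `{1}`, all boxes `{2}`, or a column containing both `1` and `2`. In the
last case the seam `s` records where `1` turns into `2`: the set in row `i` contains `1` iff
`2 * i ≤ s`, and `2` iff `s ≤ 2 * i`. So the column has `{1, 2}` in row `s / 2` if `s` is even, and
passes directly from `{1}` in row `s / 2` to `{2}` in the next row if `s` is odd. -/
inductive Column where
  | empty : Column
  | one : Column
  | two : Column
  | mixed (seam : ℕ) : Column

namespace Column

/-- The set that a column puts into row `i`, provided that row has a box in the column. -/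
def entry : Column → ℕ → Finset ℕ
  | empty, _ => ∅
  | one, _ => {1}
  | two, _ => {2}
  | mixed s, i => if 2 * i < s then {1} else if s < 2 * i then {2} else {1, 2}

/-- The set of all values occurring in a column. -/
def values : Column → Finset ℕ
  | empty => ∅
  | one => {1}
  | two => {2}
  | mixed _ => {1, 2}

/-- The column with the letters `1` and `2` exchanged, except that a mixed column is kept. -/
def flip : Column → Column
  | empty => empty
  | one => two
  | two => one
  | mixed s => mixed s

/-- The column `c` can stand in column `j` of the shape `lam/mu`: it is `empty` exactly if there are
no boxes, and for a mixed column the shape contains the boxes on both sides of the seam. -/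
def Fits (lam mu : ℕ → ℕ) (j : ℕ) : Column → Prop
  | empty => ∀ i, ¬ InShape lam mu i j
  | one => ∃ i, InShape lam mu i j
  | two => ∃ i, InShape lam mu i j
  | mixed s => InShape lam mu (s / 2) j ∧ InShape lam mu ((s + 1) / 2) j

/-- The columns `c` and `c'` in positions `j` and `j + 1` of the shape `lam/mu` form a descent, of
one of the types `21`, `2M`, `M1`: there is a row in which `2` is followed by `1`. For the types
involving a mixed column this is phrased as the condition that the mixed column fits into both
positions, which is visibly symmetric under `flip`. -/
def IsDescent (lam mu : ℕ → ℕ) (j : ℕ) : Column → Column → Prop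
  | two, one => ∃ i, InShape lam mu i j ∧ InShape lam mu i (j + 1)
  | two, mixed s => (mixed s).Fits lam mu j ∧ (mixed s).Fits lam mu (j + 1)
  | mixed s, one => (mixed s).Fits lam mu j ∧ (mixed s).Fits lam mu (j + 1)
  | _, _ => False

/-- A weight that increases along each of the descents `21`, `2M`, `M1`. -/
def weight : Column → ℕ
  | empty => 1
  | one => 2
  | two => 0
  | mixed _ => 1

variable {lam mu : ℕ → ℕ} {j : ℕ} {c c' : Column}

theorem mem_entry_mixed {s i v : ℕ} :
    v ∈ (mixed s).entry i ↔ v = 1 ∧ 2 * i ≤ s ∨ v = 2 ∧ s ≤ 2 * i := by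
  simp only [entry]
  split_ifs <;> simp only [Finset.mem_singleton, Finset.mem_insert] <;> omega

theorem one_mem_entry_mixed {s i : ℕ} : 1 ∈ (mixed s).entry i ↔ 2 * i ≤ s := by
  simp [mem_entry_mixed]

theorem two_mem_entry_mixed {s i : ℕ} : 2 ∈ (mixed s).entry i ↔ s ≤ 2 * i := by
  simp [mem_entry_mixed]

theorem entry_subset_values (c : Column) (i : ℕ) : c.entry i ⊆ c.values := by
  cases c with
  | mixed s =>
    intro v
    simp only [mem_entry_mixed, values, Finset.mem_insert, Finset.mem_singleton]
    omega
  | _ => rfl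

theorem values_subset_Icc (c : Column) : c.values ⊆ Finset.Icc 1 2 := by
  cases c <;> simp only [values] <;> decide

theorem entry_subset_Icc (c : Column) (i : ℕ) : c.entry i ⊆ Finset.Icc 1 2 :=
  (c.entry_subset_values i).trans c.values_subset_Icc

theorem entry_nonempty (hc : c ≠ empty) (i : ℕ) : (c.entry i).Nonempty := by
  cases c with
  | empty => exact absurd rfl hc
  | one => exact ⟨1, Finset.mem_singleton_self 1⟩
  | two => exact ⟨2, Finset.mem_singleton_self 2⟩
  | mixed s =>
    rcases le_total (2 * i) s with h | h
    exacts [⟨1, one_mem_entry_mixed.2 h⟩, ⟨2, two_mem_entry_mixed.2 h⟩]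

theorem finsetLE_entry_of_lt (c : Column) {i k : ℕ} (hik : i < k) :
    FinsetLE (c.entry i) (c.entry k) := by
  rw [finsetLE_iff_of_subset_Icc (c.entry_subset_Icc i) (c.entry_subset_Icc k)]
  cases c with
  | mixed s =>
    rw [two_mem_entry_mixed, one_mem_entry_mixed]
    omega
  | _ => simp [entry]

theorem entry_inter_entry_succ_nonempty_iff (hc : c ≠ empty) (i : ℕ) :
    (c.entry i ∩ c.entry (i + 1)).Nonempty ↔ c ≠ mixed (2 * i + 1) := by
  cases c with
  | empty => exact absurd rfl hc
  | one => simp [entry]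
  | two => simp [entry]
  | mixed s =>
    simp only [Finset.Nonempty, Finset.mem_inter, mem_entry_mixed, ne_eq, mixed.injEq]
    constructor
    · rintro ⟨v, hv⟩
      omega
    · intro hs
      rcases lt_or_gt_of_ne hs with h | h
      exacts [⟨2, by omega⟩, ⟨1, by omega⟩]

theorem card_entry_sub_one (c : Column) (i : ℕ) :
    (c.entry i).card - 1 = if c = mixed (2 * i) then 1 else 0 := by
  cases c with
  | mixed s =>
    simp only [entry, mixed.injEq]
    split_ifs <;> first | rfl | omega
  | _ => simp [entry]

theorem flip_involutive : Function.Involutive flip := fun c => by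
  cases c <;> rfl

theorem flip_eq_mixed_iff {s : ℕ} : c.flip = mixed s ↔ c = mixed s := by
  cases c <;> simp [flip]

theorem mem_values_flip {v : ℕ} : v ∈ c.flip.values ↔ Equiv.swap 1 2 v ∈ c.values := by
  have h1 : Equiv.swap 1 2 v = 1 ↔ v = 2 := by rw [Equiv.swap_apply_eq_iff, Equiv.swap_apply_left]
  have h2 : Equiv.swap 1 2 v = 2 ↔ v = 1 := by rw [Equiv.swap_apply_eq_iff, Equiv.swap_apply_right]
  cases c <;>
    simp only [flip, values, Finset.notMem_empty, Finset.mem_singleton, Finset.mem_insert, h1, h2]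
  exact or_comm

theorem Fits.flip (hc : c.Fits lam mu j) : c.flip.Fits lam mu j := by
  cases c <;> exact hc

theorem Fits.ne_empty (hc : c.Fits lam mu j) {i : ℕ} (hij : InShape lam mu i j) : c ≠ empty := by
  rintro rfl
  exact hc i hij

theorem Fits.mem_values_iff (hc : c.Fits lam mu j) {v : ℕ} :
    v ∈ c.values ↔ ∃ i, InShape lam mu i j ∧ v ∈ c.entry i := by
  refine ⟨fun hv => ?_, fun ⟨i, _, hv⟩ => c.entry_subset_values i hv⟩
  cases c with
  | empty => exact absurd hv (Finset.notMem_empty v)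
  | one => exact hc.imp fun i hij => ⟨hij, hv⟩
  | two => exact hc.imp fun i hij => ⟨hij, hv⟩
  | mixed s =>
    simp only [values, Finset.mem_insert, Finset.mem_singleton] at hv
    rcases hv with rfl | rfl
    · exact ⟨_, hc.1, one_mem_entry_mixed.2 (by omega)⟩
    · exact ⟨_, hc.2, two_mem_entry_mixed.2 (by omega)⟩

theorem eq_of_values_eq (h : c.values = c'.values) (hc : ∀ s, c ≠ mixed s) : c = c' := by
  have h1 : 1 ∈ c.values ↔ 1 ∈ c'.values := by rw [h]
  have h2 : 2 ∈ c.values ↔ 2 ∈ c'.values := by rw [h]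
  cases c with
  | mixed s => exact absurd rfl (hc s)
  | _ => cases c' <;> first | rfl | simp [values] at h1 h2

theorem Fits.eq_of_entry_eq (hc : c.Fits lam mu j) (hc' : c'.Fits lam mu j)
    (h : ∀ i, InShape lam mu i j → c.entry i = c'.entry i) : c = c' := by
  have hvalues : c.values = c'.values := by
    ext v
    rw [hc.mem_values_iff, hc'.mem_values_iff]
    exact exists_congr fun i => and_congr_right fun hij => by rw [h i hij]
  cases c with
  | mixed s =>
    cases c' with
    | mixed t =>
      have key : ∀ i, InShape lam mu i j → (2 * i ≤ s ↔ 2 * i ≤ t) ∧ (s ≤ 2 * i ↔ t ≤ 2 * i) :=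
        fun i hij => by
          rw [← one_mem_entry_mixed, ← one_mem_entry_mixed, ← two_mem_entry_mixed,
            ← two_mem_entry_mixed, h i hij]
          exact ⟨Iff.rfl, Iff.rfl⟩
      have := key _ hc.1
      have := key _ hc.2
      have := key _ hc'.1
      have := key _ hc'.2
      exact congrArg mixed (by omega)
    | _ => exact (eq_of_values_eq hvalues.symm (by simp)).symm
  | _ => exact eq_of_values_eq hvalues (by simp)

theorem IsDescent.exists_inShape (h : IsDescent lam mu j c c') :
    ∃ i, InShape lam mu i j ∧ InShape lam mu i (j + 1) := by
  cases c <;> cases c' <;> first | exact h.elim | exact h | exact ⟨_, h.1.1, h.2.1⟩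

theorem IsDescent.fits (h : IsDescent lam mu j c c') :
    c'.Fits lam mu j ∧ c.Fits lam mu (j + 1) := by
  obtain ⟨i, hi, hi'⟩ := h.exists_inShape
  cases c <;> cases c' <;>
    first
      | exact h.elim
      | exact ⟨⟨i, hi⟩, ⟨i, hi'⟩⟩
      | exact ⟨h.1, ⟨i, hi'⟩⟩
      | exact ⟨⟨i, hi⟩, h.2⟩

theorem IsDescent.flip (h : IsDescent lam mu j c c') : IsDescent lam mu j c'.flip c.flip := by
  cases c <;> cases c' <;> exact h

theorem IsDescent.weight_lt (h : IsDescent lam mu j c c') : c.weight < c'.weight := by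
  cases c <;> cases c' <;> first | exact h.elim | simp [weight]

theorem IsDescent.not_both_mixed (h : IsDescent lam mu j c c') {s t : ℕ} (hc : c = mixed s) :
    c' ≠ mixed t := by
  rintro rfl
  subst hc
  exact h

theorem IsDescent.exists_two_one (h : IsDescent lam mu j c c') :
    ∃ i, InShape lam mu i j ∧ InShape lam mu i (j + 1) ∧ 2 ∈ c.entry i ∧ 1 ∈ c'.entry i := by
  cases c <;> cases c' <;> try exact h.elim
  · obtain ⟨i, hi, hi'⟩ := h
    exact ⟨i, hi, hi', by simp [entry]⟩
  · exact ⟨_, h.1.1, h.2.1, by simp [entry], one_mem_entry_mixed.2 (by omega)⟩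
  · exact ⟨_, h.1.2, h.2.2, two_mem_entry_mixed.2 (by omega), by simp [entry]⟩

end Column

section Words

open Column

variable {lam mu : ℕ → ℕ}

/-- A rewriting step on words of columns: swap two adjacent columns that form a descent. -/
def DescentStep (lam mu : ℕ → ℕ) (f g : ℕ → Column) : Prop :=
  ∃ j, IsDescent lam mu j (f j) (f (j + 1)) ∧ g = f ∘ Equiv.swap j (j + 1)

/-- A word of columns is benign if every column fits into its position and the mixed columns alone
violate no row condition, that is, no row has a `2` in a mixed column and a `1` in a later one. -/
def IsBenign (lam mu : ℕ → ℕ) (f : ℕ → Column) : Prop :=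
  (∀ j, (f j).Fits lam mu j) ∧
    ∀ j k s t, j < k → f j = mixed s → f k = mixed t → ∀ i, s ≤ 2 * i → t < 2 * i

theorem DescentStep.flip {f g : ℕ → Column} (h : DescentStep lam mu f g) :
    DescentStep lam mu (Column.flip ∘ g) (Column.flip ∘ f) := by
  obtain ⟨j, hj, rfl⟩ := h
  refine ⟨j, ?_, ?_⟩
  · simpa only [Function.comp_apply, Equiv.swap_apply_left, Equiv.swap_apply_right] using hj.flip
  · funext k
    simp only [Function.comp_apply, Equiv.swap_apply_self]

theorem IsBenign.flip {f : ℕ → Column} (hf : IsBenign lam mu f) :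
    IsBenign lam mu (Column.flip ∘ f) :=
  ⟨fun j => (hf.1 j).flip, fun j k s t hjk hj hk =>
    hf.2 j k s t hjk (flip_eq_mixed_iff.1 hj) (flip_eq_mixed_iff.1 hk)⟩

theorem IsBenign.descentStep {f g : ℕ → Column} (hf : IsBenign lam mu f)
    (h : DescentStep lam mu f g) : IsBenign lam mu g := by
  obtain ⟨j, hj, rfl⟩ := h
  refine ⟨fun k => ?_, fun p q s t hpq hp hq => ?_⟩
  · by_cases hkj : k = j
    · subst hkj
      simpa only [Function.comp_apply, Equiv.swap_apply_left] using hj.fits.1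
    by_cases hkj' : k = j + 1
    · subst hkj'
      simpa only [Function.comp_apply, Equiv.swap_apply_right] using hj.fits.2
    simpa only [Function.comp_apply, Equiv.swap_apply_of_ne_of_ne hkj hkj'] using hf.1 k
  · refine hf.2 _ _ s t ?_ hp hq
    by_contra hle
    -- The swap reverses only the pair `(j, j + 1)`.
    obtain ⟨rfl, rfl⟩ : p = j ∧ q = j + 1 := by
      simp only [Equiv.swap_apply_def] at hle
      split_ifs at hle <;> omega
    simp only [Function.comp_apply, Equiv.swap_apply_left, Equiv.swap_apply_right] at hp hq
    exact hj.not_both_mixed hq hp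

theorem exists_perm_of_reflTransGen_descentStep {f g : ℕ → Column}
    (h : Relation.ReflTransGen (DescentStep lam mu) f g) : ∃ σ : Equiv.Perm ℕ, g = f ∘ σ := by
  induction h with
  | refl => exact ⟨1, rfl⟩
  | tail _ hstep ih =>
    obtain ⟨σ, rfl⟩ := ih
    obtain ⟨j, -, rfl⟩ := hstep
    exact ⟨σ * Equiv.swap j (j + 1), rfl⟩

theorem InShape.lt_zero (hlam : Antitone lam) {i j : ℕ} (h : InShape lam mu i j) : j < lam 0 :=
  h.2.trans_le (hlam i.zero_le)

theorem InShape.column_between (hlam : Antitone lam) (hmu : Antitone mu) {a b i j : ℕ}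
    (ha : InShape lam mu a j) (hb : InShape lam mu b j) (hai : a ≤ i) (hib : i ≤ b) :
    InShape lam mu i j :=
  ⟨(hmu hai).trans ha.1, hb.2.trans_le (hlam hib)⟩

theorem InShape.row_between {i a b k : ℕ} (ha : InShape lam mu i a) (hb : InShape lam mu i b)
    (hak : a ≤ k) (hkb : k ≤ b) : InShape lam mu i k :=
  ⟨ha.1.trans hak, hkb.trans_lt hb.2⟩

theorem wellFounded_descentStep (hlam : Antitone lam) :
    WellFounded (Function.swap (DescentStep lam mu)) := by
  let height (f : ℕ → Column) : ℕ := ∑ i ∈ Finset.range (lam 0), i * (f i).weight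
  refine Subrelation.wf ?_ (measure height).wf
  rintro _ f ⟨j, hj, rfl⟩
  obtain ⟨i, -, hij⟩ := hj.exists_inShape
  exact sum_range_mul_comp_swap_lt (w := fun i => (f i).weight) (hij.lt_zero hlam) hj.weight_lt

theorem swap_braid {α : Type*} [DecidableEq α] {a b c : α} (hab : a ≠ b) (hac : a ≠ c)
    (hbc : b ≠ c) :
    Equiv.swap a b * Equiv.swap b c * Equiv.swap a b
      = Equiv.swap b c * Equiv.swap a b * Equiv.swap b c := by
  rw [Equiv.swap_mul_swap_mul_swap hab hac, Equiv.swap_comm a b, Equiv.swap_comm b c,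
    Equiv.swap_mul_swap_mul_swap hbc.symm hac.symm, Equiv.swap_comm]

theorem join_descentStep_of_far {f : ℕ → Column} {j k : ℕ} (hjk : j + 1 < k)
    (hj : IsDescent lam mu j (f j) (f (j + 1))) (hk : IsDescent lam mu k (f k) (f (k + 1))) :
    Relation.Join (Relation.ReflTransGen (DescentStep lam mu))
      (f ∘ Equiv.swap j (j + 1)) (f ∘ Equiv.swap k (k + 1)) := by
  have hcomm : Equiv.swap j (j + 1) * Equiv.swap k (k + 1)
      = Equiv.swap k (k + 1) * Equiv.swap j (j + 1) :=
    (Equiv.Perm.disjoint_swap_swap (by grind)).commute.eq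
  refine ⟨(f ∘ Equiv.swap j (j + 1)) ∘ Equiv.swap k (k + 1),
    .single ⟨k, ?_, rfl⟩, .single ⟨j, ?_, ?_⟩⟩
  · simpa only [Function.comp_apply, Equiv.swap_apply_of_ne_of_ne (show k ≠ j by omega)
      (show k ≠ j + 1 by omega), Equiv.swap_apply_of_ne_of_ne (show k + 1 ≠ j by omega)
      (show k + 1 ≠ j + 1 by omega)] using hk
  · simpa only [Function.comp_apply, Equiv.swap_apply_of_ne_of_ne (show j ≠ k by omega)
      (show j ≠ k + 1 by omega), Equiv.swap_apply_of_ne_of_ne (show j + 1 ≠ k by omega)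
      (show j + 1 ≠ k + 1 by omega)] using hj
  · exact congrArg (fun σ : Equiv.Perm ℕ => f ∘ σ) hcomm

theorem join_descentStep_of_adjacent {f : ℕ → Column} {j : ℕ}
    (hj : IsDescent lam mu j (f j) (f (j + 1)))
    (hj' : IsDescent lam mu (j + 1) (f (j + 1)) (f (j + 1 + 1))) :
    Relation.Join (Relation.ReflTransGen (DescentStep lam mu))
      (f ∘ Equiv.swap j (j + 1)) (f ∘ Equiv.swap (j + 1) (j + 1 + 1)) := by
  -- The word reads `2M1`, and both `2M1 → M21 → M12 → 1M2` and `2M1 → 21M → 12M → 1M2` sort it.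
  obtain ⟨s, h0, h1, h2⟩ : ∃ s, f j = two ∧ f (j + 1) = mixed s ∧ f (j + 1 + 1) = one := by
    cases h0 : f j <;> cases h1 : f (j + 1) <;> cases h2 : f (j + 1 + 1) <;>
      simp_all [IsDescent]
  rw [h0, h1] at hj
  rw [h1, h2] at hj'
  have hj2 : Equiv.swap j (j + 1) (j + 1 + 1) = j + 1 + 1 :=
    Equiv.swap_apply_of_ne_of_ne (by omega) (by omega)
  have hj0 : Equiv.swap (j + 1) (j + 1 + 1) j = j :=
    Equiv.swap_apply_of_ne_of_ne (by omega) (by omega)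
  refine ⟨((f ∘ Equiv.swap j (j + 1)) ∘ Equiv.swap (j + 1) (j + 1 + 1)) ∘ Equiv.swap j (j + 1),
    .tail (.single ⟨j + 1, ?_, rfl⟩) ⟨j, ?_, rfl⟩,
    .tail (.single ⟨j, ?_, rfl⟩) ⟨j + 1, ?_, ?_⟩⟩
  · simp only [Function.comp_apply, Equiv.swap_apply_right, hj2, h0, h2]
    exact ⟨_, hj'.1.1, hj'.2.1⟩
  · simp only [Function.comp_apply, Equiv.swap_apply_left, hj0, hj2, h1, h2]
    exact hj
  · simp only [Function.comp_apply, Equiv.swap_apply_left, hj0, h0, h2]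
    exact ⟨_, hj.1.1, hj.2.1⟩
  · simp only [Function.comp_apply, Equiv.swap_apply_right, hj0, hj2, h0, h1]
    exact hj'
  · exact congrArg (fun σ : Equiv.Perm ℕ => f ∘ σ)
      (swap_braid (a := j) (b := j + 1) (c := j + 1 + 1) (by omega) (by omega) (by omega))

theorem locallyConfluent_descentStep (f g h : ℕ → Column) (hg : DescentStep lam mu f g)
    (hh : DescentStep lam mu f h) :
    Relation.Join (Relation.ReflTransGen (DescentStep lam mu)) g h := by
  obtain ⟨j, hj, rfl⟩ := hg
  obtain ⟨k, hk, rfl⟩ := hh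
  wlog hjk : j ≤ k generalizing j k
  · exact symm (this k hk j hj (by omega))
  obtain rfl | rfl | hjk : j = k ∨ k = j + 1 ∨ j + 1 < k := by omega
  · exact ⟨_, .refl, .refl⟩
  · exact join_descentStep_of_adjacent hj hk
  · exact join_descentStep_of_far hjk hj hk

end Words

section Tables

open Column

variable {lam mu : ℕ → ℕ} {f : ℕ → Column} {T : ℕ → ℕ → Finset ℕ}

/-- The filling of the shape `lam/mu` whose columns are the letters of the word `f`. -/
noncomputable def wordTable (lam mu : ℕ → ℕ) (f : ℕ → Column) (i j : ℕ) : Finset ℕ :=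
  if InShape lam mu i j then (f j).entry i else ∅

theorem wordTable_of_inShape {i j : ℕ} (hij : InShape lam mu i j) :
    wordTable lam mu f i j = (f j).entry i :=
  if_pos hij

theorem mem_wordTable {i j v : ℕ} :
    v ∈ wordTable lam mu f i j ↔ InShape lam mu i j ∧ v ∈ (f j).entry i := by
  by_cases hij : InShape lam mu i j <;> simp [wordTable, hij]

theorem Column.finsetLE_entry_of_not_isDescent (hlam : Antitone lam) (hmu : Antitone mu)
    {i j : ℕ} {c c' : Column} (hc : c.Fits lam mu j) (hc' : c'.Fits lam mu (j + 1))
    (hcc' : ¬ IsDescent lam mu j c c')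
    (hmixed : ∀ s t, c = mixed s → c' = mixed t → s ≤ 2 * i → t < 2 * i)
    (hij : InShape lam mu i j) (hij' : InShape lam mu i (j + 1)) :
    FinsetLE (c.entry i) (c'.entry i) := by
  have hup : ∀ r ≤ i, InShape lam mu r j → InShape lam mu r (j + 1) := fun r hri hr =>
    ⟨hr.1.trans j.le_succ, hij'.2.trans_le (hlam hri)⟩
  have hdown : ∀ r, i ≤ r → InShape lam mu r (j + 1) → InShape lam mu r j := fun r hir hr =>
    ⟨(hmu hir).trans hij.1, j.lt_succ_self.trans hr.2⟩
  rw [finsetLE_iff_of_subset_Icc (c.entry_subset_Icc i) (c'.entry_subset_Icc i)]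
  rintro ⟨h2, h1⟩
  cases c with
  | empty => exact hc i hij
  | one => simp [entry] at h2
  | two =>
    cases c' with
    | empty => exact hc' i hij'
    | one => exact hcc' ⟨i, hij, hij'⟩
    | two => simp [entry] at h1
    | mixed t =>
      rw [one_mem_entry_mixed] at h1
      exact hcc' ⟨⟨hdown _ (by omega) hc'.1, hdown _ (by omega) hc'.2⟩, hc'⟩
  | mixed s =>
    rw [two_mem_entry_mixed] at h2
    cases c' with
    | empty => exact hc' i hij'
    | one => exact hcc' ⟨hc, ⟨hup _ (by omega) hc.1, hup _ (by omega) hc.2⟩⟩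
    | two => simp [entry] at h1
    | mixed t =>
      rw [one_mem_entry_mixed] at h1
      exact absurd (hmixed s t rfl rfl h2) (by omega)

theorem isSVRPPn_wordTable (hlam : Antitone lam) (hmu : Antitone mu) (hf : IsBenign lam mu f)
    (hnf : IsNormalForm (DescentStep lam mu) f) : IsSVRPPn lam mu 2 (wordTable lam mu f) := by
  have hsub : ∀ i j, wordTable lam mu f i j ⊆ Finset.Icc 1 2 := fun i j v hv =>
    (f j).entry_subset_Icc i (mem_wordTable.1 hv).2
  refine ⟨⟨fun i j hij => if_neg hij, fun i j hij => ?_,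
    fun i j v hv => (Finset.mem_Icc.1 (hsub i j hv)).1, fun i j hij hij' => ?_,
    fun i j hij hij' => ?_⟩, hsub⟩
  · rw [wordTable_of_inShape hij]
    exact entry_nonempty ((hf.1 j).ne_empty hij) i
  · rw [wordTable_of_inShape hij, wordTable_of_inShape hij']
    exact finsetLE_entry_of_not_isDescent hlam hmu (hf.1 j) (hf.1 (j + 1))
      (fun h => hnf _ ⟨j, h, rfl⟩)
      (fun s t hs ht => hf.2 j (j + 1) s t j.lt_succ_self hs ht i) hij hij'
  · rw [wordTable_of_inShape hij, wordTable_of_inShape hij']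
    exact (f j).finsetLE_entry_of_lt i.lt_succ_self

theorem IsSVRPP.inShape_of_mem_s2 (hT : IsSVRPP lam mu T) {i j v : ℕ} (hv : v ∈ T i j) :
    InShape lam mu i j := by
  by_contra hij
  exact Finset.notMem_empty v (hT.1 i j hij ▸ hv)

theorem IsSVRPP.finsetLE_row (hT : IsSVRPP lam mu T) {i a b : ℕ} (ha : InShape lam mu i a)
    (hb : InShape lam mu i b) (hab : a < b) : FinsetLE (T i a) (T i b) :=
  finsetLE_of_lt (g := T i) hab (fun k hak hkb => hT.2.1 i k (ha.row_between hb hak.le hkb.le))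
    fun k hak hkb => hT.2.2.2.1 i k (ha.row_between hb hak hkb.le)
      (ha.row_between hb (hak.trans k.le_succ) hkb)

theorem IsSVRPP.finsetLE_column (hlam : Antitone lam) (hmu : Antitone mu)
    (hT : IsSVRPP lam mu T) {a b j : ℕ} (ha : InShape lam mu a j) (hb : InShape lam mu b j)
    (hab : a < b) : FinsetLE (T a j) (T b j) :=
  finsetLE_of_lt (g := fun i => T i j) hab
    (fun k hak hkb => hT.2.1 k j (ha.column_between hlam hmu hb hak.le hkb.le))
    fun k hak hkb => hT.2.2.2.2 k j (ha.column_between hlam hmu hb hak hkb.le)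
      (ha.column_between hlam hmu hb (hak.trans k.le_succ) hkb)

theorem isBenign_of_isSVRPP_wordTable (hlam : Antitone lam) (hf : ∀ j, (f j).Fits lam mu j)
    (hT : IsSVRPP lam mu (wordTable lam mu f)) : IsBenign lam mu f := by
  refine ⟨hf, fun j k s t hjk hj hk i hsi => ?_⟩
  by_contra! hit
  -- Row `(s + 1) / 2`, the first with a `2` in column `j`, still has a `1` in column `k`.
  have hfj : (mixed s).Fits lam mu j := hj ▸ hf j
  have hfk : (mixed t).Fits lam mu k := hk ▸ hf k
  have hrk : InShape lam mu ((s + 1) / 2) k :=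
    ⟨hfj.2.1.trans hjk.le, hfk.1.2.trans_le (hlam (by omega))⟩
  refine absurd (hT.finsetLE_row hfj.2 hrk hjk 2 ?_ 1 ?_) (by omega)
  · exact mem_wordTable.2 ⟨hfj.2, hj ▸ two_mem_entry_mixed.2 (by omega)⟩
  · exact mem_wordTable.2 ⟨hrk, hk ▸ one_mem_entry_mixed.2 (by omega)⟩

theorem isNormalForm_of_isSVRPP_wordTable (hT : IsSVRPP lam mu (wordTable lam mu f)) :
    IsNormalForm (DescentStep lam mu) f := by
  rintro _ ⟨j, hj, rfl⟩
  obtain ⟨i, hij, hij', h2, h1⟩ := hj.exists_two_one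
  exact absurd (hT.2.2.2.1 i j hij hij' 2 (mem_wordTable.2 ⟨hij, h2⟩) 1
    (mem_wordTable.2 ⟨hij', h1⟩)) (by omega)

theorem IsSVRPPn.one_mem_or_two_mem (hT : IsSVRPPn lam mu 2 T) {i j : ℕ}
    (hij : InShape lam mu i j) : 1 ∈ T i j ∨ 2 ∈ T i j := by
  obtain ⟨v, hv⟩ := hT.1.2.1 i j hij
  rcases eq_one_or_eq_two_of_mem (hT.2 i j) hv with rfl | rfl
  exacts [.inl hv, .inr hv]

theorem IsSVRPPn.exists_mixed_entry_eq (hlam : Antitone lam) (hmu : Antitone mu)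
    (hT : IsSVRPPn lam mu 2 T) {a b j : ℕ} (ha : 1 ∈ T a j) (hb : 2 ∈ T b j) :
    ∃ s, (mixed s).Fits lam mu j ∧ ∀ i, InShape lam mu i j → T i j = (mixed s).entry i := by
  have hle : ∀ i k, 2 ∈ T i j → 1 ∈ T k j → k ≤ i := fun i k hi hk => by
    by_contra! hik
    exact absurd (hT.1.finsetLE_column hlam hmu (hT.1.inShape_of_mem_s2 hi)
      (hT.1.inShape_of_mem_s2 hk) hik 2 hi 1 hk) (by omega)
  have h2 : ∃ i, 2 ∈ T i j := ⟨b, hb⟩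
  obtain ⟨m, hm, hmin⟩ : ∃ m, 2 ∈ T m j ∧ ∀ i, 2 ∈ T i j → m ≤ i :=
    ⟨Nat.find h2, Nat.find_spec h2, fun _ hi => Nat.find_min' h2 hi⟩
  have hmj : InShape lam mu m j := hT.1.inShape_of_mem_s2 hm
  suffices ∃ s, (mixed s).Fits lam mu j ∧ ∀ i, InShape lam mu i j →
      (1 ∈ T i j ↔ 2 * i ≤ s) ∧ (2 ∈ T i j ↔ s ≤ 2 * i) by
    obtain ⟨s, hs, h⟩ := this
    exact ⟨s, hs, fun i hij => finset_eq_of_subset_Icc (hT.2 i j) (entry_subset_Icc _ i)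
      ((h i hij).1.trans one_mem_entry_mixed.symm) ((h i hij).2.trans two_mem_entry_mixed.symm)⟩
  by_cases h1 : 1 ∈ T m j
  · refine ⟨2 * m, ⟨?_, ?_⟩, fun i hij => ?_⟩
    · rwa [show 2 * m / 2 = m by omega]
    · rwa [show (2 * m + 1) / 2 = m by omega]
    · have := hT.one_mem_or_two_mem hij
      have := hle m i hm
      grind
  · have ham : a < m := lt_of_le_of_ne (hle m a hm ha) (by rintro rfl; exact h1 ha)
    refine ⟨2 * m - 1, ⟨?_, ?_⟩, fun i hij => ?_⟩
    · exact (hT.1.inShape_of_mem_s2 ha).column_between hlam hmu hmj (by omega) (by omega)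
    · rwa [show (2 * m - 1 + 1) / 2 = m by omega]
    · have := hT.one_mem_or_two_mem hij
      have := hle m i hm
      grind

theorem IsSVRPPn.exists_column_entry_eq (hlam : Antitone lam) (hmu : Antitone mu)
    (hT : IsSVRPPn lam mu 2 T) (j : ℕ) :
    ∃ c : Column, c.Fits lam mu j ∧ ∀ i, InShape lam mu i j → T i j = c.entry i := by
  by_cases hbox : ∃ i, InShape lam mu i j
  swap
  · exact ⟨empty, not_exists.1 hbox, fun i hij => absurd ⟨i, hij⟩ hbox⟩
  by_cases h1 : ∃ a, 1 ∈ T a j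
  · by_cases h2 : ∃ b, 2 ∈ T b j
    · obtain ⟨⟨a, ha⟩, b, hb⟩ := And.intro h1 h2
      exact (hT.exists_mixed_entry_eq hlam hmu ha hb).imp' mixed fun s hs => hs
    · exact ⟨one, hbox, fun i hij => finset_eq_of_subset_Icc (hT.2 i j) (entry_subset_Icc _ i)
        (iff_of_true ((hT.one_mem_or_two_mem hij).resolve_right (not_exists.1 h2 i))
          (Finset.mem_singleton_self 1))
        (iff_of_false (not_exists.1 h2 i) (by simp [entry]))⟩
  · exact ⟨two, hbox, fun i hij => finset_eq_of_subset_Icc (hT.2 i j) (entry_subset_Icc _ i)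
      (iff_of_false (not_exists.1 h1 i) (by simp [entry]))
      (iff_of_true ((hT.one_mem_or_two_mem hij).resolve_left (not_exists.1 h1 i))
        (Finset.mem_singleton_self 2))⟩

/-- Reading a filling by columns identifies the SVRPPs with entries in `{1, 2}` with the benign
words of columns that are in normal form. -/
noncomputable def normalWordEquiv (hlam : Antitone lam) (hmu : Antitone mu) :
    {f : ℕ → Column // IsBenign lam mu f ∧ IsNormalForm (DescentStep lam mu) f} ≃
      {T : ℕ → ℕ → Finset ℕ // IsSVRPPn lam mu 2 T} :=
  Equiv.ofBijective
    (fun f => ⟨wordTable lam mu f.1, isSVRPPn_wordTable hlam hmu f.2.1 f.2.2⟩) <| by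
  refine ⟨fun f g hfg => Subtype.ext (funext fun j => ?_), fun ⟨T, hT⟩ => ?_⟩
  · refine (f.2.1.1 j).eq_of_entry_eq (g.2.1.1 j) fun i hij => ?_
    rw [← wordTable_of_inShape hij, ← wordTable_of_inShape hij]
    exact congrFun (congrFun (Subtype.ext_iff.1 hfg) i) j
  · choose f hf hfT using hT.exists_column_entry_eq hlam hmu
    obtain rfl : wordTable lam mu f = T := by
      funext i j
      by_cases hij : InShape lam mu i j
      · rw [wordTable_of_inShape hij, hfT j i hij]
      · rw [wordTable, if_neg hij, hT.1.1 i j hij]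
    exact ⟨⟨f, isBenign_of_isSVRPP_wordTable hlam hf hT.1,
      isNormalForm_of_isSVRPP_wordTable hT.1⟩, rfl⟩

end Tables

section Statistics

open Column

variable {lam mu : ℕ → ℕ} {f g : ℕ → Column} {σ : Equiv.Perm ℕ}

theorem ircont_wordTable (hf : ∀ j, (f j).Fits lam mu j) (v : ℕ) :
    ircont (wordTable lam mu f) v = {j | v ∈ (f j).values}.ncard := by
  simp only [ircont, mem_wordTable, (hf _).mem_values_iff]

theorem exv_wordTable (hf : ∀ j, (f j).Fits lam mu j) (r : ℕ) :
    exv lam mu (wordTable lam mu f) r = {j | f j = mixed (2 * r)}.ncard := by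
  have hin : ∀ j, f j = mixed (2 * r) → j ∈ Finset.Ico (mu r) (lam r) := fun j hj => by
    have hfit : (mixed (2 * r)).Fits lam mu j := hj ▸ hf j
    simpa [InShape] using hfit.1
  calc exv lam mu (wordTable lam mu f) r
      = ∑ j ∈ Finset.Ico (mu r) (lam r), if f j = mixed (2 * r) then 1 else 0 :=
        Finset.sum_congr rfl fun j hj => by
          rw [wordTable_of_inShape (Finset.mem_Ico.1 hj), card_entry_sub_one]
    _ = {j ∈ Finset.Ico (mu r) (lam r) | f j = mixed (2 * r)}.card :=
        (Finset.card_filter _ _).symm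
    _ = {j | f j = mixed (2 * r)}.ncard := by
        rw [← Set.ncard_coe_finset, Finset.coe_filter]
        exact congrArg Set.ncard (Set.ext fun j => ⟨And.right, fun hj => ⟨hin j hj, hj⟩⟩)

theorem ceq_wordTable_add (hf : ∀ j, (f j).Fits lam mu j) (r : ℕ) :
    ceq lam mu (wordTable lam mu f) r + {j | f j = mixed (2 * r + 1)}.ncard
      = {j | InShape lam mu r j ∧ InShape lam mu (r + 1) j}.ncard := by
  have hin : ∀ j, f j = mixed (2 * r + 1) → InShape lam mu r j ∧ InShape lam mu (r + 1) j :=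
    fun j hj => by
      have hfit : (mixed (2 * r + 1)).Fits lam mu j := hj ▸ hf j
      rwa [Fits, show (2 * r + 1) / 2 = r by omega, show (2 * r + 1 + 1) / 2 = r + 1 by omega]
        at hfit
  have hfin : {j | InShape lam mu r j ∧ InShape lam mu (r + 1) j}.Finite :=
    (Set.finite_Iio (lam r)).subset fun j hj => hj.1.2
  have hceq : ceq lam mu (wordTable lam mu f) r = ({j | InShape lam mu r j ∧
      InShape lam mu (r + 1) j} \ {j | f j = mixed (2 * r + 1)}).ncard := by
    refine congrArg Set.ncard (Set.ext fun j => ?_)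
    refine and_assoc.symm.trans (and_congr_right fun ⟨hrj, hrj'⟩ => ?_)
    rw [wordTable_of_inShape hrj, wordTable_of_inShape hrj',
      exists_max_eq_min_iff_inter_nonempty ((f j).finsetLE_entry_of_lt r.lt_succ_self)]
    exact entry_inter_entry_succ_nonempty_iff ((hf j).ne_empty hrj) r
  rw [hceq]
  exact Set.ncard_sdiff_add_ncard_of_subset hin hfin

theorem ncard_setOf_eq_mixed_flip_comp_perm (s : ℕ) :
    {j | (Column.flip ∘ f ∘ σ) j = mixed s}.ncard = {j | f j = mixed s}.ncard := by
  simp only [Function.comp_apply, flip_eq_mixed_iff]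
  exact ncard_setOf_apply_perm σ fun j => f j = mixed s

theorem ceq_wordTable_flip_comp_perm (hf : ∀ j, (f j).Fits lam mu j)
    (hg : ∀ j, (g j).Fits lam mu j) (hgf : g = Column.flip ∘ f ∘ σ) (r : ℕ) :
    ceq lam mu (wordTable lam mu g) r = ceq lam mu (wordTable lam mu f) r := by
  have hmixed : {j | g j = mixed (2 * r + 1)}.ncard = {j | f j = mixed (2 * r + 1)}.ncard := by
    rw [hgf, ncard_setOf_eq_mixed_flip_comp_perm]
  have hceq := (ceq_wordTable_add hg r).trans (ceq_wordTable_add hf r).symm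
  omega

theorem exv_wordTable_flip_comp_perm (hf : ∀ j, (f j).Fits lam mu j)
    (hg : ∀ j, (g j).Fits lam mu j) (hgf : g = Column.flip ∘ f ∘ σ) (r : ℕ) :
    exv lam mu (wordTable lam mu g) r = exv lam mu (wordTable lam mu f) r := by
  rw [exv_wordTable hg, exv_wordTable hf, hgf, ncard_setOf_eq_mixed_flip_comp_perm]

theorem ircont_wordTable_flip_comp_perm (hf : ∀ j, (f j).Fits lam mu j)
    (hg : ∀ j, (g j).Fits lam mu j) (hgf : g = Column.flip ∘ f ∘ σ) (v : ℕ) :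
    ircont (wordTable lam mu g) v = ircont (wordTable lam mu f) (Equiv.swap 1 2 v) := by
  rw [ircont_wordTable hg, ircont_wordTable hf, hgf]
  simp only [Function.comp_apply, mem_values_flip]
  exact ncard_setOf_apply_perm σ fun j => Equiv.swap 1 2 v ∈ (f j).values

end Statistics

theorem exists_involution_svrpp12_general {lam mu : ℕ → ℕ} (hlam : Antitone lam)
    (hmu : Antitone mu) :
    ∃ Φ : {T : ℕ → ℕ → Finset ℕ // IsSVRPPn lam mu 2 T} →
          {T : ℕ → ℕ → Finset ℕ // IsSVRPPn lam mu 2 T},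
      Function.Involutive Φ ∧
      ∀ T, (∀ r, ceq lam mu (Φ T).1 r = ceq lam mu T.1 r) ∧
           (∀ r, exv lam mu (Φ T).1 r = exv lam mu T.1 r) ∧
           (∀ v, ircont (Φ T).1 v = ircont T.1 (Equiv.swap 1 2 v)) := by
  obtain ⟨Ψ, hΨ, hsteps⟩ := exists_involutive_of_reversing (wellFounded_descentStep hlam)
    locallyConfluent_descentStep (ι := fun f => Column.flip ∘ f)
    (fun f => funext fun j => Column.flip_involutive (f j)) (fun _ _ h => h.flip)
    (P := IsBenign lam mu) (fun _ hf => hf.flip) (fun _ _ hf h => hf.descentStep h)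
  let e := normalWordEquiv hlam hmu
  refine ⟨fun T => e (Ψ (e.symm T)), fun T => ?_, fun T => ?_⟩
  · simp only [e.symm_apply_apply, hΨ _, e.apply_symm_apply]
  · obtain ⟨f, rfl⟩ := e.surjective T
    obtain ⟨σ, hσ⟩ := exists_perm_of_reflTransGen_descentStep (hsteps f)
    have hf := f.2.1.1
    have hg := (Ψ f).2.1.1
    simp only [e.symm_apply_apply]
    exact ⟨ceq_wordTable_flip_comp_perm hf hg hσ, exv_wordTable_flip_comp_perm hf hg hσ,
      ircont_wordTable_flip_comp_perm hf hg hσ⟩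

/-- For any skew shape `lam/mu`, there exists an involution `Φ` on
`SVRPP^{12}(lam/mu)` (SVRPPs whose entries are nonempty subsets of `{1,2}`) preserving the
`ceq` and `ex` statistics and exchanging the first two entries of the `ircont` statistic. -/
theorem exists_involution_svrpp12 (lam mu : ℕ → ℕ)
    (hlam : IsPartitionFun lam) (hmu : IsPartitionFun mu)
    (hsub : ∀ r, mu r ≤ lam r) :
    ∃ Φ : {T : ℕ → ℕ → Finset ℕ // IsSVRPPn lam mu 2 T} →
          {T : ℕ → ℕ → Finset ℕ // IsSVRPPn lam mu 2 T},
      Function.Involutive Φ ∧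
      ∀ T, (∀ r, ceq lam mu (Φ T).1 r = ceq lam mu T.1 r) ∧
           (∀ r, exv lam mu (Φ T).1 r = exv lam mu T.1 r) ∧
           (∀ v, ircont (Φ T).1 v = ircont T.1 (Equiv.swap 1 2 v)) :=
  exists_involution_svrpp12_general (antitone_nat_of_succ_le hlam.1)
    (antitone_nat_of_succ_le hmu.1)
end
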